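/- arXiv:2409.12879 — 2 statements merged into one kernel-verified Lean document; each statement's English description precedes it below -/
import Mathlib

section
/- Fix an integer base b ≥ 2, s ≥ 1, an integer t ≥ 0, p, q ∈ [1,∞], and α ∈ ℝ with α ≥ 1/p if q = 1 and α > 1/p if q > 1. Then there exists a constant C > 0, depending only on s, p, q, α, b and t, such that for every integer m ≥ max(1,t) and every (t,m,s)-net P in base b with N = b^m points, the worst-case error of the QMC rule Q_P over the unit ball of the Haar wavelet norm satisfies e^{wor}(Q_P) := sup{ |∫_{[0,1]^s} f(x) dx − b^{−m} Σ_{p∈P} S(f)(p)| : f ∈ L_1([0,1]^s), ‖f‖_{wav,α,s,p,q} ≤ 1 } ≤ C N^{−α} (ln N)^{(s−1)/q′}, where q′ is the conjugate exponent of q; in particular, for q = 1 one has e^{wor}(Q_P) ≤ C N^{−α}. -/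
open MeasureTheory ENNReal Set

noncomputable section

/-- The index set `Δ_{j-1}` (for level `j`). -/
def deltaIdx (b j : ℕ) : Finset ℕ := if j = 0 then {0} else Finset.range (b ^ (j - 1))

/-- The index set `∇_j`. -/
def nablaIdx (b j : ℕ) : Finset ℕ := if j = 0 then {0} else Finset.range b

/-- The univariate Haar-type wavelet `ψ^j_{i,k}` in base `b`. -/
def haarPsi (b : ℕ) (j i k : ℕ) (x : ℝ) : ℝ :=
  if j = 0 then (Set.Ico (0:ℝ) 1).indicator (fun _ => (1:ℝ)) x
  else (b : ℝ) ^ ((j : ℝ) / 2 - 1) *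
    ((b : ℝ) *
        (Set.Ico ((b:ℝ) ^ (-(j:ℝ)) * ((b:ℝ) * k + i))
          ((b:ℝ) ^ (-(j:ℝ)) * ((b:ℝ) * k + i + 1))).indicator (fun _ => (1:ℝ)) x
      - (Set.Ico ((b:ℝ) ^ (1 - (j:ℝ)) * k)
          ((b:ℝ) ^ (1 - (j:ℝ)) * (k + 1))).indicator (fun _ => (1:ℝ)) x)

/-- The multivariate tensor product wavelet `Ψ^j_{i,k}`. -/
def haarPsiS (b s : ℕ) (j i k : Fin s → ℕ) (x : Fin s → ℝ) : ℝ :=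
  ∏ ℓ, haarPsi b (j ℓ) (i ℓ) (k ℓ) (x ℓ)

/-- The unit cube `[0,1]^s`. -/
def cube (s : ℕ) : Set (Fin s → ℝ) := Set.Icc 0 1

/-- The index set `Δ_{j-1}` for multi-indices. -/
def deltaIdxS (b s : ℕ) (j : Fin s → ℕ) : Finset (Fin s → ℕ) :=
  Fintype.piFinset fun ℓ => deltaIdx b (j ℓ)

/-- The index set `∇_j` for multi-indices. -/
def nablaIdxS (b s : ℕ) (j : Fin s → ℕ) : Finset (Fin s → ℕ) :=
  Fintype.piFinset fun ℓ => nablaIdx b (j ℓ)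

/-- The Haar coefficient `⟨f, Ψ^j_{i,k}⟩ = ∫_{[0,1]^s} f Ψ^j_{i,k}`. -/
def haarCoef (b s : ℕ) (f : (Fin s → ℝ) → ℝ) (j i k : Fin s → ℕ) : ℝ :=
  ∫ x in cube s, f x * haarPsiS b s j i k x

/-- Finite `ℓ^p`-type norm with exponent `p ∈ [1,∞]` (maximum when `p = ∞`). -/
def lpIdx (p : ℝ≥0∞) {ι : Type*} (A : Finset ι) (g : ι → ℝ≥0∞) : ℝ≥0∞ :=
  if p = ∞ then A.sup g else (∑ a ∈ A, g a ^ p.toReal) ^ (1 / p.toReal)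

/-- `ℓ^q`-type norm over an arbitrary index type (supremum when `q = ∞`). -/
def lqIdx (q : ℝ≥0∞) {ι : Type*} (g : ι → ℝ≥0∞) : ℝ≥0∞ :=
  if q = ∞ then ⨆ i, g i else (∑' i, g i ^ q.toReal) ^ (1 / q.toReal)

/-- The Haar wavelet norm `‖f‖_{wav,α,s,p,q}` (with the conventions for `p = ∞`, `q = ∞`). -/
def wavNorm (b s : ℕ) (α : ℝ) (p q : ℝ≥0∞) (f : (Fin s → ℝ) → ℝ) : ℝ≥0∞ :=
  lqIdx q fun j : Fin s → ℕ =>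
    ENNReal.ofReal ((b : ℝ) ^ ((α - 1 / p.toReal + 1 / 2) * ∑ ℓ, (j ℓ : ℝ))) *
      lpIdx p (deltaIdxS b s j ×ˢ nablaIdxS b s j)
        (fun ki => ENNReal.ofReal |haarCoef b s f j ki.2 ki.1|)

/-- The pointwise wavelet expansion `S(f)`. -/
def wavExp (b s : ℕ) (f : (Fin s → ℝ) → ℝ) (x : Fin s → ℝ) : ℝ :=
  ∑' j : Fin s → ℕ, ∑ k ∈ deltaIdxS b s j, ∑ i ∈ nablaIdxS b s j,
    haarCoef b s f j i k * haarPsiS b s j i k x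

/-- The elementary `b`-adic box `E^j_a`. -/
def elemBox (b s : ℕ) (j a : Fin s → ℕ) : Set (Fin s → ℝ) :=
  {x | ∀ ℓ, (a ℓ : ℝ) * ((b : ℝ) ^ (j ℓ))⁻¹ ≤ x ℓ ∧ x ℓ < ((a ℓ : ℝ) + 1) * ((b : ℝ) ^ (j ℓ))⁻¹}

open Classical in
/-- A `(t,m,s)`-net in base `b`: a multiset of `b^m` points of `[0,1)^s` such that every
elementary box of volume `b^{t-m}` contains exactly `b^t` of the points. -/
def IsNet (b s t m : ℕ) (P : Multiset (Fin s → ℝ)) : Prop :=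
  Multiset.card P = b ^ m ∧ (∀ x ∈ P, ∀ ℓ, 0 ≤ x ℓ ∧ x ℓ < 1) ∧
    ∀ j a : Fin s → ℕ, (∑ ℓ, j ℓ) = m - t → (∀ ℓ, a ℓ < b ^ j ℓ) →
      Multiset.card (P.filter (· ∈ elemBox b s j a)) = b ^ t

/-- The space `V^{s,L}`, spanned by indicators of elementary boxes of volume `b^{-L}`. -/
def Vspace (b s L : ℕ) : Submodule ℝ ((Fin s → ℝ) → ℝ) :=
  Submodule.span ℝ
    {f | ∃ j a : Fin s → ℕ, (∑ ℓ, j ℓ) = L ∧ (∀ ℓ, a ℓ < b ^ j ℓ) ∧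
      f = (elemBox b s j a).indicator fun _ => (1:ℝ)}

/-!
The wavelets `Ψ^j_{i,k}` with `0 < |j| ≤ m - t` are constant on the boxes of a partition of
`[0,1)^s` into elementary boxes of volume `b^{t-m}`, and they have mean zero, so they sum to zero
over the net, while the level `j = 0` reproduces the integral. The error therefore comes only from
the levels with `|j| ≥ m - t`. A wavelet of such a level is supported in an elementary box holding
at most `b^{t+s}` points of the net, which combined with Hölder's inequality for the coefficients
bounds the contribution of level `j` by the `j`-th term of the wavelet norm times a constant
multiple of `b^{m(1-1/p)} b^{-(α-1/p)|j|}`. A second Hölder inequality over the levels leaves the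
`ℓ^{q'}` norm of this geometric weight. Since there are at most `(L+1)^{s-1}` levels with
`|j| = L`, it is of order `b^{-(α-1/p)m} m^{(s-1)/q'}`, and after division by `N = b^m` this is the
claimed rate.
-/

section MultiIndices

variable {ι : Type*} [Fintype ι]

theorem exists_le_sum_eq {n : ℕ} {j : ι → ℕ} (hn : n ≤ ∑ ℓ, j ℓ) : ∃ J ≤ j, ∑ ℓ, J ℓ = n := by
  classical
  induction n with
  | zero => exact ⟨0, zero_le, by simp⟩
  | succ n ih =>
    obtain ⟨J, hJj, hJ⟩ := ih (Nat.le_of_succ_le hn)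
    obtain ⟨ℓ, -, hℓ⟩ : ∃ ℓ ∈ Finset.univ, J ℓ < j ℓ := Finset.exists_lt_of_sum_lt (by omega)
    refine ⟨J + Pi.single ℓ 1, fun i => ?_, by simp [Finset.sum_add_distrib, hJ]⟩
    obtain rfl | hi := eq_or_ne i ℓ
    · simpa using hℓ
    · simpa [hi] using hJj i

theorem finite_setOf_sum_lt (n : ℕ) : {j : ι → ℕ | ∑ ℓ, j ℓ < n}.Finite := by
  classical
  exact (finite_Iic fun _ : ι => n).subset fun j hj ℓ =>
    (Finset.single_le_sum_of_canonicallyOrdered (f := j) (Finset.mem_univ ℓ)).trans (le_of_lt hj)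

end MultiIndices

section Sums

variable {X M : Type*} [AddCommMonoid M]

theorem sum_map_ite_eq_countP_nsmul (p : X → Prop) [DecidablePred p] (c : M)
    (P : Multiset X) :
    (P.map fun x => if p x then c else 0).sum = P.countP p • c := by
  induction P using Multiset.induction with
  | empty => simp
  | cons a P ih => by_cases h : p a <;> simp [h, ih, add_nsmul, add_comm]

theorem hasSum_sum_map {Y : Type*} [TopologicalSpace M] [ContinuousAdd M]
    {g : X → Y → M} {a : Y → M} {P : Multiset Y} (h : ∀ y ∈ P, HasSum (fun x => g x y) (a y)) :
    HasSum (fun x => (P.map (g x)).sum) (P.map a).sum := by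
  induction P using Multiset.induction with
  | empty => simp
  | cons y P ih =>
    simp only [Multiset.map_cons, Multiset.sum_cons]
    exact (h y (Multiset.mem_cons_self y P)).add (ih fun z hz => h z (Multiset.mem_cons_of_mem hz))

theorem enorm_tsum_sub_le_tsum_enorm {E : Type*} [NormedAddCommGroup E] {A : Set X}
    {g : X → E} {a : X} (hg : Summable g) (h0 : ∀ x ∉ A, x ≠ a → g x = 0) :
    ‖∑' x, g x - g a‖ₑ ≤ ∑' x : A, ‖g x‖ₑ := by
  classical
  rw [hg.tsum_eq_add_tsum_ite a, add_sub_cancel_left, tsum_subtype A fun x => ‖g x‖ₑ]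
  refine enorm_tsum_le_tsum_enorm.trans (ENNReal.tsum_le_tsum fun x => ?_)
  by_cases hx : x = a ∨ x ∉ A
  · obtain hx | hx := hx <;> by_cases hxa : x = a <;> simp_all
  · rw [not_or, not_not] at hx
    simp [hx]

theorem summable_of_tsum_enorm_tail_ne_top {ι E : Type*} [Fintype ι] [NormedAddCommGroup E]
    [CompleteSpace E] {g : (ι → ℕ) → E} {n : ℕ}
    (h : ∑' j : {j : ι → ℕ // n ≤ ∑ ℓ, j ℓ}, ‖g j‖ₑ ≠ ∞) : Summable g := by
  have hcompl : {j : ι → ℕ | n ≤ ∑ ℓ, j ℓ}ᶜ.Finite := by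
    simpa [compl_ofPred] using finite_setOf_sum_lt n
  rw [← hcompl.summable_compl_iff, compl_compl]
  exact Summable.of_enorm h

end Sums

section WeightedSums

variable {ι κ : Type*}

theorem lpIdx_eq_lqIdx (p : ℝ≥0∞) (A : Finset ι) (g : ι → ℝ≥0∞) :
    lpIdx p A g = lqIdx p fun a : A => g a := by
  unfold lpIdx lqIdx
  split_ifs
  · rw [Finset.sup_eq_iSup, iSup_subtype']
  · rw [Finset.tsum_subtype A fun a => g a ^ p.toReal]

theorem lqIdx_comp_le_of_injective (q : ℝ≥0∞) (g : ι → ℝ≥0∞) {φ : κ → ι}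
    (hφ : Function.Injective φ) : lqIdx q (fun a => g (φ a)) ≤ lqIdx q g := by
  unfold lqIdx
  split_ifs
  · exact iSup_comp_le g φ
  · gcongr
    exact ENNReal.tsum_comp_le_tsum_of_injective hφ fun i => g i ^ q.toReal

theorem lqIdx_top (g : ι → ℝ≥0∞) : lqIdx ∞ g = ⨆ i, g i := if_pos rfl

theorem lqIdx_one (g : ι → ℝ≥0∞) : lqIdx 1 g = ∑' i, g i := by simp [lqIdx]

theorem lqIdx_of_ne_top {q : ℝ≥0∞} (hq : q ≠ ∞) (g : ι → ℝ≥0∞) :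
    lqIdx q g = (∑' i, g i ^ q.toReal) ^ (1 / q.toReal) := if_neg hq

theorem tsum_mul_le_iSup_mul_tsum (g w : ι → ℝ≥0∞) :
    ∑' i, g i * w i ≤ (⨆ i, g i) * ∑' i, w i := by
  rw [← ENNReal.tsum_mul_left]
  gcongr with i
  exact le_iSup g i

theorem tsum_mul_le_lqIdx_mul_lqIdx (q q' : ℝ≥0∞) [hqq' : HolderConjugate q q']
    (g w : ι → ℝ≥0∞) : ∑' i, g i * w i ≤ lqIdx q g * lqIdx q' w := by
  rcases eq_or_ne q ∞ with rfl | hq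
  · obtain rfl : q' = 1 := (HolderConjugate.unique ∞ q' 1)
    simpa only [lqIdx_top, lqIdx_one] using tsum_mul_le_iSup_mul_tsum g w
  rcases eq_or_ne q' ∞ with rfl | hq'
  · obtain rfl : q = 1 := hqq'.symm.unique _ _ _
    simpa only [lqIdx_top, lqIdx_one, mul_comm] using tsum_mul_le_iSup_mul_tsum w g
  have hconj : q.toReal.HolderConjugate q'.toReal := HolderConjugate.toReal_of_ne_top hq hq'
  rw [lqIdx_of_ne_top hq, lqIdx_of_ne_top hq', ENNReal.tsum_eq_iSup_sum]
  refine iSup_le fun F => (ENNReal.inner_le_Lp_mul_Lq F g w hconj).trans ?_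
  gcongr <;> exact ENNReal.sum_le_tsum F

theorem one_div_toReal_add_one_div_toReal (q q' : ℝ≥0∞) [HolderConjugate q q'] :
    1 / q.toReal + 1 / q'.toReal = 1 := by
  have h := HolderConjugate.inv_add_inv_eq_one q q'
  have hq : q⁻¹ ≠ ∞ := ne_top_of_le_ne_top one_ne_top (le_self_add.trans_eq h)
  have hq' : q'⁻¹ ≠ ∞ := ne_top_of_le_ne_top one_ne_top (le_add_self.trans_eq h)
  rw [one_div, one_div, ← toReal_inv, ← toReal_inv, ← toReal_add hq hq', h, toReal_one]

theorem lqIdx_le_of_le_of_tsum_le (p p' : ℝ≥0∞) [hconj : HolderConjugate p p'] {w : ι → ℝ≥0∞}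
    {M R : ℝ≥0∞} (hM : ∀ i, w i ≤ M) (hR : ∑' i, w i ≤ R) :
    lqIdx p' w ≤ M ^ (1 / p.toReal) * R ^ (1 / p'.toReal) := by
  rcases eq_or_ne p' ∞ with rfl | hp'
  · obtain rfl : p = 1 := hconj.symm.unique _ _ _
    simpa [lqIdx_top] using hM
  have hp'1 : 1 ≤ p'.toReal := toReal_mono hp' (@HolderConjugate.one_le p' p hconj.symm)
  have hexp : 1 - 1 / p'.toReal = 1 / p.toReal := by
    linarith [one_div_toReal_add_one_div_toReal p p']
  have hw (i : ι) : w i ^ p'.toReal ≤ M ^ (p'.toReal - 1) * w i := by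
    calc w i ^ p'.toReal = w i ^ (p'.toReal - 1) * w i ^ (1 : ℝ) := by
          rw [← ENNReal.rpow_add_of_nonneg _ _ (by linarith) zero_le_one, sub_add_cancel]
      _ ≤ M ^ (p'.toReal - 1) * w i := by
          rw [ENNReal.rpow_one]
          gcongr
          exact hM i
  calc lqIdx p' w = (∑' i, w i ^ p'.toReal) ^ (1 / p'.toReal) := lqIdx_of_ne_top hp' w
    _ ≤ (∑' i, M ^ (p'.toReal - 1) * w i) ^ (1 / p'.toReal) := by gcongr with i; exact hw i
    _ ≤ (M ^ (p'.toReal - 1) * R) ^ (1 / p'.toReal) := by rw [ENNReal.tsum_mul_left]; gcongr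
    _ = M ^ (1 / p.toReal) * R ^ (1 / p'.toReal) := by
        rw [ENNReal.mul_rpow_of_nonneg _ _ (by positivity), ← ENNReal.rpow_mul, sub_mul,
          mul_one_div_cancel (by linarith), one_mul, hexp]

theorem sum_mul_le_lpIdx_mul {p : ℝ≥0∞} (hp : 1 ≤ p) (A : Finset ι)
    (g : ι → ℝ≥0∞) {w : ι → ℝ≥0∞} {M R : ℝ≥0∞} (hM : ∀ a ∈ A, w a ≤ M)
    (hR : ∑ a ∈ A, w a ≤ R) :
    ∑ a ∈ A, g a * w a ≤ lpIdx p A g * (M ^ (1 / p.toReal) * R ^ (1 - 1 / p.toReal)) := by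
  have := HolderConjugate.conjExponent hp
  rw [lpIdx_eq_lqIdx, ← eq_sub_of_add_eq' (one_div_toReal_add_one_div_toReal p p.conjExponent),
    ← Finset.sum_coe_sort, ← tsum_fintype (L := .unconditional _)]
  refine (tsum_mul_le_lqIdx_mul_lqIdx p p.conjExponent _ _).trans ?_
  gcongr
  refine lqIdx_le_of_le_of_tsum_le p p.conjExponent (fun a => hM a a.2) ?_
  rwa [tsum_fintype, Finset.sum_coe_sort A w]

end WeightedSums

section GeometricSeries

theorem tsum_add_one_pow_mul_pow_ne_top (k : ℕ) {r : ℝ≥0∞} (hr : r < 1) :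
    ∑' d : ℕ, ((d : ℝ≥0∞) + 1) ^ k * r ^ d ≠ ∞ := by
  lift r to NNReal using hr.ne_top
  rcases eq_or_ne r 0 with rfl | hr0
  · simp [tsum_eq_single 0]
  have hr1 : ‖(r : ℝ)‖ < 1 := by simpa using hr
  have hsum : Summable fun d : ℕ => ((d : NNReal) + 1) ^ k * r ^ d := by
    rw [← NNReal.summable_coe]
    have h : Summable fun d : ℕ => ((d + 1 : ℕ) : ℝ) ^ k * (r : ℝ) ^ (d + 1) :=
      (summable_nat_add_iff (f := fun d : ℕ => (d : ℝ) ^ k * (r : ℝ) ^ d) 1).2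
        (summable_pow_mul_geometric_of_norm_lt_one k hr1)
    refine (h.mul_left (r : ℝ)⁻¹).congr fun d => ?_
    push_cast
    field_simp
    rw [pow_succ']
  have h := ENNReal.tsum_coe_ne_top_iff_summable.2 hsum
  push_cast at h
  exact h

theorem card_antidiagonalTuple_succ_le (d L : ℕ) :
    (Finset.Nat.antidiagonalTuple (d + 1) L).card ≤ (L + 1) ^ d := by
  calc (Finset.Nat.antidiagonalTuple (d + 1) L).card
      ≤ (Fintype.piFinset fun _ : Fin d => Finset.range (L + 1)).card := by
        refine Finset.card_le_card_of_injOn Fin.tail (fun j hj => ?_) fun j hj j' hj' htail => ?_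
        · simp only [Finset.mem_coe, Finset.Nat.mem_antidiagonalTuple] at hj
          simp only [Finset.mem_coe, Fintype.mem_piFinset, Finset.mem_range, Nat.lt_succ_iff, ← hj]
          exact fun ℓ => Finset.single_le_sum (fun _ _ => Nat.zero_le _) (Finset.mem_univ ℓ.succ)
        · simp only [Finset.mem_coe, Finset.Nat.mem_antidiagonalTuple, Fin.sum_univ_succ] at hj hj'
          have htail' (ℓ : Fin d) : j ℓ.succ = j' ℓ.succ := congrFun htail ℓ
          simp only [htail'] at hj
          exact funext <| Fin.cases (by lia) htail'
    _ = (L + 1) ^ d := by simp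

theorem tsum_comp_sum_le {s : ℕ} (hs : s ≠ 0) (F : ℕ → ℝ≥0∞) :
    ∑' j : Fin s → ℕ, F (∑ ℓ, j ℓ) ≤ ∑' L : ℕ, ((L : ℝ≥0∞) + 1) ^ (s - 1) * F L := by
  obtain ⟨d, rfl⟩ := Nat.exists_eq_succ_of_ne_zero hs
  rw [← (Finset.Nat.sigmaAntidiagonalTupleEquivTuple (d + 1)).tsum_eq, ENNReal.tsum_sigma']
  gcongr with L
  calc ∑' j : Finset.Nat.antidiagonalTuple (d + 1) L, F (∑ ℓ, j.1 ℓ)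
      = ∑' _ : Finset.Nat.antidiagonalTuple (d + 1) L, F L :=
        tsum_congr fun j => by rw [Finset.Nat.mem_antidiagonalTuple.1 j.2]
    _ = (Finset.Nat.antidiagonalTuple (d + 1) L).card * F L := by simp
    _ ≤ ((L : ℝ≥0∞) + 1) ^ d * F L := by
        gcongr
        exact_mod_cast card_antidiagonalTuple_succ_le d L

theorem tsum_pow_sum_le {s : ℕ} (hs : s ≠ 0) (r : ℝ≥0∞) (n : ℕ) :
    ∑' j : {j : Fin s → ℕ // n ≤ ∑ ℓ, j ℓ}, r ^ (∑ ℓ, j.1 ℓ) ≤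
      (∑' d : ℕ, ((d : ℝ≥0∞) + 1) ^ (s - 1) * r ^ d) * (r ^ n * ((n : ℝ≥0∞) + 1) ^ (s - 1)) := by
  calc ∑' j : {j : Fin s → ℕ // n ≤ ∑ ℓ, j ℓ}, r ^ (∑ ℓ, j.1 ℓ)
      = ∑' j : Fin s → ℕ, (if n ≤ ∑ ℓ, j ℓ then r ^ (∑ ℓ, j ℓ) else 0) :=
        (tsum_subtype {j : Fin s → ℕ | n ≤ ∑ ℓ, j ℓ} fun j => r ^ (∑ ℓ, j ℓ)).trans <|
          tsum_congr fun j => by simp [indicator_apply]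
    _ ≤ ∑' L : ℕ, ((L : ℝ≥0∞) + 1) ^ (s - 1) * (if n ≤ L then r ^ L else 0) :=
        tsum_comp_sum_le hs fun L => if n ≤ L then r ^ L else 0
    _ = ∑' d : ℕ, (((d + n : ℕ) : ℝ≥0∞) + 1) ^ (s - 1) * r ^ (d + n) := by
        have hzero : ∑ L ∈ Finset.range n,
            ((L : ℝ≥0∞) + 1) ^ (s - 1) * (if n ≤ L then r ^ L else 0) = 0 :=
          Finset.sum_eq_zero fun L hL => by simp [Finset.mem_range.1 hL]
        rw [← ENNReal.summable.sum_add_tsum_nat_add' (k := n), hzero, zero_add]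
        simp
    _ ≤ ∑' d : ℕ, ((d : ℝ≥0∞) + 1) ^ (s - 1) * r ^ d * (r ^ n * ((n : ℝ≥0∞) + 1) ^ (s - 1)) := by
        refine ENNReal.tsum_le_tsum fun d => ?_
        calc (((d + n : ℕ) : ℝ≥0∞) + 1) ^ (s - 1) * r ^ (d + n)
            ≤ (((d : ℝ≥0∞) + 1) * (n + 1)) ^ (s - 1) * r ^ (d + n) := by
              gcongr
              exact_mod_cast (by nlinarith : d + n + 1 ≤ (d + 1) * (n + 1))
          _ = ((d : ℝ≥0∞) + 1) ^ (s - 1) * r ^ d * (r ^ n * ((n : ℝ≥0∞) + 1) ^ (s - 1)) := by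
              rw [mul_pow, pow_add]
              ring
    _ = _ := ENNReal.tsum_mul_right

theorem exists_lqIdx_pow_sum_le {s : ℕ} (hs : s ≠ 0) {q : ℝ≥0∞} (hq : q ≠ 0) {r : ℝ≥0∞}
    (hr : r ≤ 1) (hr' : q ≠ ∞ → r < 1) :
    ∃ C ≠ ∞, ∀ n : ℕ, lqIdx q (fun j : {j : Fin s → ℕ // n ≤ ∑ ℓ, j ℓ} => r ^ (∑ ℓ, j.1 ℓ)) ≤
      C * (r ^ n * ((n : ℝ≥0∞) + 1) ^ ((s - 1 : ℝ) * (1 / q.toReal))) := by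
  rcases eq_or_ne q ∞ with rfl | hq_top
  · refine ⟨1, one_ne_top, fun n => ?_⟩
    simpa [lqIdx_top] using fun j hj => pow_le_pow_right_of_le_one' hr hj
  have hq0 : 0 < q.toReal := toReal_pos hq hq_top
  set K := ∑' d : ℕ, ((d : ℝ≥0∞) + 1) ^ (s - 1) * (r ^ q.toReal) ^ d
  have hK_top : K ≠ ∞ :=
    tsum_add_one_pow_mul_pow_ne_top _ (ENNReal.rpow_lt_one (hr' hq_top) hq0)
  refine ⟨K ^ (1 / q.toReal), rpow_ne_top_of_nonneg (by positivity) hK_top, fun n => ?_⟩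
  have hpow (k : ℕ) : (r ^ k) ^ q.toReal = (r ^ q.toReal) ^ k := by
    rw [← rpow_natCast_mul, ← rpow_mul_natCast, mul_comm]
  simp only [lqIdx_of_ne_top hq_top, hpow]
  calc (∑' j : {j : Fin s → ℕ // n ≤ ∑ ℓ, j ℓ}, (r ^ q.toReal) ^ ∑ ℓ, j.1 ℓ) ^ (1 / q.toReal)
      ≤ (K * ((r ^ q.toReal) ^ n * ((n : ℝ≥0∞) + 1) ^ (s - 1))) ^ (1 / q.toReal) := by
        gcongr
        exact tsum_pow_sum_le hs _ n
    _ = K ^ (1 / q.toReal) * (r ^ n * ((n : ℝ≥0∞) + 1) ^ ((s - 1 : ℝ) * (1 / q.toReal))) := by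
        have hinv : 0 ≤ 1 / q.toReal := by positivity
        rw [mul_rpow_of_nonneg _ _ hinv, mul_rpow_of_nonneg _ _ hinv, ← hpow, ← ENNReal.rpow_mul,
          mul_one_div_cancel hq0.ne', ENNReal.rpow_one, ← rpow_natCast_mul,
          Nat.cast_pred (Nat.pos_of_ne_zero hs)]

end GeometricSeries

section Cells

variable {b : ℕ}

/-- The index of the cell `[a b⁻ʲ, (a + 1) b⁻ʲ)` containing `x ≥ 0`. -/
def cellIdx (b j : ℕ) (x : ℝ) : ℕ := ⌊x * (b : ℝ) ^ j⌋₊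

theorem cellIdx_eq_iff (hb : 0 < b) (j k : ℕ) {x : ℝ} (hx : 0 ≤ x) :
    cellIdx b j x = k ↔ (k : ℝ) * ((b : ℝ) ^ j)⁻¹ ≤ x ∧ x < ((k : ℝ) + 1) * ((b : ℝ) ^ j)⁻¹ := by
  have hpos : (0 : ℝ) < (b : ℝ) ^ j := by positivity
  rw [cellIdx, Nat.floor_eq_iff (by positivity), ← div_eq_mul_inv, ← div_eq_mul_inv,
    div_le_iff₀ hpos, lt_div_iff₀ hpos]

theorem cellIdx_div_pow (hb : 0 < b) {j J : ℕ} (hj : j ≤ J) (x : ℝ) :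
    cellIdx b J x / b ^ (J - j) = cellIdx b j x := by
  obtain ⟨d, rfl⟩ := Nat.exists_eq_add_of_le hj
  rw [Nat.add_sub_cancel_left, cellIdx, cellIdx, ← Nat.floor_div_natCast, Nat.cast_pow, pow_add,
    ← mul_assoc, mul_div_cancel_right₀ _ (by positivity)]

theorem cellIdx_lt (hb : 0 < b) (j : ℕ) {x : ℝ} (hx : x < 1) : cellIdx b j x < b ^ j := by
  rw [cellIdx, Nat.floor_lt' (by positivity), Nat.cast_pow]
  exact mul_lt_of_lt_one_left (by positivity) hx

theorem cellIdx_natCast_div_pow (hb : 0 < b) {j J : ℕ} (hj : j ≤ J) (a : ℕ) :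
    cellIdx b j (a / (b : ℝ) ^ J) = a / b ^ (J - j) := by
  rw [← cellIdx_div_pow hb hj, cellIdx, div_mul_cancel₀ _ (by positivity), Nat.floor_natCast]

theorem card_filter_range_div_eq {n d c : ℕ} (hd : 0 < d) (hc : c < n) :
    ((Finset.range (n * d)).filter (· / d = c)).card = d := by
  have h : (Finset.range (n * d)).filter (· / d = c) = Finset.Ico (c * d) ((c + 1) * d) := by
    ext a
    have hle : (c + 1) * d ≤ n * d := by gcongr; lia
    rw [Finset.mem_filter, Finset.mem_range, Finset.mem_Ico, Nat.div_eq_iff hd]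
    lia
  rw [h, Nat.card_Ico, add_mul, one_mul, Nat.add_sub_cancel_left]

theorem card_filter_cellIdx_eq (hb : 0 < b) {j J c : ℕ} (hj : j ≤ J) (hc : c < b ^ j) :
    ((Finset.range (b ^ J)).filter fun a : ℕ => cellIdx b j (a / (b : ℝ) ^ J) = c).card =
      b ^ (J - j) := by
  simp only [cellIdx_natCast_div_pow hb hj]
  rw [← Nat.add_sub_cancel' hj, pow_add, Nat.add_sub_cancel' hj]
  exact card_filter_range_div_eq (by positivity) hc

end Cells

section UnivariateHaar

variable {b j i k : ℕ} {x y : ℝ}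

theorem deltaIdx_eq_range (b j : ℕ) : deltaIdx b j = Finset.range (b ^ (j - 1)) := by
  rcases eq_or_ne j 0 with rfl | hj
  · simp [deltaIdx]
  · simp [deltaIdx, hj]

theorem haarPsi_zero (hx : x ∈ Ico (0 : ℝ) 1) : haarPsi b 0 i k x = 1 := by
  simp [haarPsi, indicator_of_mem hx]

theorem haarPsi_succ (hb : 0 < b) (hx : 0 ≤ x) :
    haarPsi b (j + 1) i k x = (b : ℝ) ^ (((j + 1 : ℕ) : ℝ) / 2 - 1) *
      ((b : ℝ) * (if cellIdx b (j + 1) x = b * k + i then 1 else 0) -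
        if cellIdx b j x = k then 1 else 0) := by
  have hfine : x ∈ Ico ((b : ℝ) ^ (-((j + 1 : ℕ) : ℝ)) * ((b : ℝ) * k + i))
      ((b : ℝ) ^ (-((j + 1 : ℕ) : ℝ)) * ((b : ℝ) * k + i + 1)) ↔
      cellIdx b (j + 1) x = b * k + i := by
    rw [cellIdx_eq_iff hb _ _ hx, Real.rpow_neg (by positivity), Real.rpow_natCast, mem_Ico]
    push_cast
    simp only [mul_comm]
  have hcoarse : x ∈ Ico ((b : ℝ) ^ (1 - ((j + 1 : ℕ) : ℝ)) * k)
      ((b : ℝ) ^ (1 - ((j + 1 : ℕ) : ℝ)) * (k + 1)) ↔ cellIdx b j x = k := by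
    rw [cellIdx_eq_iff hb _ _ hx, Nat.cast_succ, sub_add_cancel_right,
      Real.rpow_neg (by positivity), Real.rpow_natCast, mem_Ico]
    simp only [mul_comm]
  simp only [haarPsi, Nat.succ_ne_zero, if_false, indicator_apply, hfine, hcoarse]

theorem haarPsi_eq_of_cellIdx_eq (hb : 0 < b) {J : ℕ} (hj : j ≤ J) (hx : x ∈ Ico (0 : ℝ) 1)
    (hy : y ∈ Ico (0 : ℝ) 1) (h : cellIdx b J x = cellIdx b J y) :
    haarPsi b j i k x = haarPsi b j i k y := by
  have hcell {l : ℕ} (hl : l ≤ J) : cellIdx b l x = cellIdx b l y := by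
    rw [← cellIdx_div_pow hb hl, h, cellIdx_div_pow hb hl]
  cases j with
  | zero => rw [haarPsi_zero hx, haarPsi_zero hy]
  | succ j => rw [haarPsi_succ hb hx.1, haarPsi_succ hb hy.1, hcell hj, hcell (by lia)]

theorem haarPsi_cellIdx_div_pow (hb : 0 < b) {J : ℕ} (hj : j ≤ J) (hx : x ∈ Ico (0 : ℝ) 1) :
    haarPsi b j i k (cellIdx b J x / (b : ℝ) ^ J) = haarPsi b j i k x := by
  have hpos : (0 : ℝ) < (b : ℝ) ^ J := by positivity
  refine haarPsi_eq_of_cellIdx_eq hb hj ⟨by positivity, ?_⟩ hx ?_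
  · rw [div_lt_one hpos]
    exact_mod_cast cellIdx_lt hb J hx.2
  · rw [cellIdx_natCast_div_pow hb le_rfl, Nat.sub_self, pow_zero, Nat.div_one]

theorem sum_haarPsi_div_pow_eq_zero (hb : 0 < b) {J : ℕ} (hj0 : j ≠ 0) (hj : j ≤ J)
    (hi : i ∈ nablaIdx b j) (hk : k ∈ deltaIdx b j) :
    ∑ a ∈ Finset.range (b ^ J), haarPsi b j i k (a / (b : ℝ) ^ J) = 0 := by
  obtain ⟨j, rfl⟩ := Nat.exists_eq_succ_of_ne_zero hj0
  rw [deltaIdx_eq_range, Finset.mem_range, Nat.succ_sub_one] at hk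
  simp only [nablaIdx, hj0, if_false, Finset.mem_range] at hi
  have hfine : b * k + i < b ^ (j + 1) := by
    calc b * k + i < b * (k + 1) := by lia
      _ ≤ b ^ (j + 1) := by rw [pow_succ']; gcongr; lia
  have hexp : J - j = J - (j + 1) + 1 := by lia
  calc ∑ a ∈ Finset.range (b ^ J), haarPsi b (j + 1) i k (a / (b : ℝ) ^ J)
      = (b : ℝ) ^ (((j + 1 : ℕ) : ℝ) / 2 - 1) *
        ((b : ℝ) * ((b ^ (J - (j + 1)) : ℕ) : ℝ) - ((b ^ (J - j) : ℕ) : ℝ)) := by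
        rw [← card_filter_cellIdx_eq hb hj hfine,
          ← card_filter_cellIdx_eq hb (Nat.le_of_succ_le hj) hk, ← Finset.sum_boole,
          ← Finset.sum_boole, Finset.mul_sum, ← Finset.sum_sub_distrib, Finset.mul_sum]
        exact Finset.sum_congr rfl fun a _ =>
          haarPsi_succ hb (x := a / (b : ℝ) ^ J) (by positivity)
    _ = 0 := by rw [hexp, pow_succ']; push_cast; ring

theorem abs_haarPsi_le (hb : 0 < b) (hi : i ∈ nablaIdx b j) (hk : k ∈ deltaIdx b j)
    (hx : x ∈ Ico (0 : ℝ) 1) :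
    |haarPsi b j i k x| ≤ if cellIdx b (j - 1) x = k then (b : ℝ) ^ ((j : ℝ) / 2) else 0 := by
  rw [deltaIdx_eq_range, Finset.mem_range] at hk
  cases j with
  | zero =>
    have hcell := cellIdx_lt hb 0 hx.2
    simp_all [haarPsi_zero hx]
  | succ j =>
    have hb1 : (1 : ℝ) ≤ b := by exact_mod_cast hb
    have hsub : cellIdx b (j + 1) x = b * k + i → cellIdx b j x = k := fun h => by
      simp only [nablaIdx, Nat.succ_ne_zero, if_false, Finset.mem_range] at hi
      rw [← cellIdx_div_pow hb j.le_succ, h, Nat.succ_sub (le_refl j), Nat.sub_self, pow_one,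
        Nat.mul_add_div hb, Nat.div_eq_of_lt hi, add_zero]
    have hpow : (b : ℝ) ^ (((j + 1 : ℕ) : ℝ) / 2) = (b : ℝ) ^ (((j + 1 : ℕ) : ℝ) / 2 - 1) * b := by
      rw [← Real.rpow_add_one (by positivity), sub_add_cancel]
    rw [haarPsi_succ hb hx.1, abs_mul, abs_of_pos (by positivity), hpow, Nat.succ_sub_one,
      ← mul_ite_zero]
    gcongr
    split_ifs with hfine hcoarse hcoarse
    · rw [abs_le]; constructor <;> linarith
    · exact absurd (hsub hfine) hcoarse
    · simpa using hb1
    · simp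

end UnivariateHaar

section MultivariateHaar

variable {b s : ℕ} {j i k : Fin s → ℕ} {x : Fin s → ℝ}

/-- The index `a` of the elementary box `E^j_a` containing `x ∈ [0,1)^s`. -/
def boxIdx (b : ℕ) {s : ℕ} (j : Fin s → ℕ) (x : Fin s → ℝ) : Fin s → ℕ :=
  fun ℓ => cellIdx b (j ℓ) (x ℓ)

/-- The indices `a` of all elementary boxes `E^j_a` in the unit cube. -/
def boxGrid (b : ℕ) {s : ℕ} (j : Fin s → ℕ) : Finset (Fin s → ℕ) :=
  Fintype.piFinset fun ℓ => Finset.range (b ^ j ℓ)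

theorem mem_boxGrid {a : Fin s → ℕ} : a ∈ boxGrid b j ↔ ∀ ℓ, a ℓ < b ^ j ℓ := by
  simp [boxGrid]

theorem boxIdx_mem_boxGrid (hb : 0 < b) (j : Fin s → ℕ) (hx : ∀ ℓ, x ℓ < 1) :
    boxIdx b j x ∈ boxGrid b j :=
  mem_boxGrid.2 fun ℓ => cellIdx_lt hb (j ℓ) (hx ℓ)

theorem boxIdx_div_pow (hb : 0 < b) {I J : Fin s → ℕ} (hIJ : I ≤ J) :
    (fun ℓ => boxIdx b J x ℓ / b ^ (J ℓ - I ℓ)) = boxIdx b I x :=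
  funext fun ℓ => cellIdx_div_pow hb (hIJ ℓ) (x ℓ)

theorem mem_elemBox_iff (hb : 0 < b) {a : Fin s → ℕ} (hx : ∀ ℓ, 0 ≤ x ℓ) :
    x ∈ elemBox b s j a ↔ boxIdx b j x = a := by
  rw [funext_iff]
  exact forall_congr' fun ℓ => (cellIdx_eq_iff hb (j ℓ) (a ℓ) (hx ℓ)).symm

theorem card_filter_boxGrid_div_eq (hb : 0 < b) {I J c : Fin s → ℕ} (hIJ : I ≤ J)
    (hc : c ∈ boxGrid b I) :
    ((boxGrid b J).filter fun a => (fun ℓ => a ℓ / b ^ (J ℓ - I ℓ)) = c).card =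
      b ^ ∑ ℓ, (J ℓ - I ℓ) := by
  have hset : ((boxGrid b J).filter fun a => (fun ℓ => a ℓ / b ^ (J ℓ - I ℓ)) = c) =
      Fintype.piFinset fun ℓ =>
        (Finset.range (b ^ I ℓ * b ^ (J ℓ - I ℓ))).filter (· / b ^ (J ℓ - I ℓ) = c ℓ) := by
    ext a
    simp [mem_boxGrid, funext_iff, forall_and, ← pow_add, fun ℓ => Nat.add_sub_cancel' (hIJ ℓ)]
  rw [hset, Fintype.card_piFinset, ← Finset.prod_pow_eq_pow_sum]
  exact Finset.prod_congr rfl fun ℓ _ =>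
    card_filter_range_div_eq (by positivity) (mem_boxGrid.1 hc ℓ)

theorem card_nablaIdxS_le (hb : 0 < b) (j : Fin s → ℕ) : (nablaIdxS b s j).card ≤ b ^ s := by
  calc (nablaIdxS b s j).card = ∏ ℓ, (nablaIdx b (j ℓ)).card := Fintype.card_piFinset _
    _ ≤ ∏ _ℓ : Fin s, b := by
        gcongr with ℓ
        unfold nablaIdx
        split_ifs
        · exact hb
        · exact (Finset.card_range b).le
    _ = b ^ s := by simp

theorem haarPsiS_zero (hx : ∀ ℓ, x ℓ ∈ Ico (0 : ℝ) 1) : haarPsiS b s 0 i k x = 1 :=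
  Finset.prod_eq_one fun ℓ _ => haarPsi_zero (hx ℓ)

theorem haarPsiS_boxIdx_div_pow (hb : 0 < b) {J : Fin s → ℕ} (hj : j ≤ J)
    (hx : ∀ ℓ, x ℓ ∈ Ico (0 : ℝ) 1) :
    haarPsiS b s j i k (fun ℓ => boxIdx b J x ℓ / (b : ℝ) ^ J ℓ) = haarPsiS b s j i k x :=
  Finset.prod_congr rfl fun ℓ _ => haarPsi_cellIdx_div_pow hb (hj ℓ) (hx ℓ)

theorem sum_haarPsiS_div_pow_eq_zero (hb : 0 < b) {J : Fin s → ℕ} (hj0 : j ≠ 0) (hj : j ≤ J)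
    (hi : i ∈ nablaIdxS b s j) (hk : k ∈ deltaIdxS b s j) :
    ∑ a ∈ boxGrid b J, haarPsiS b s j i k (fun ℓ => a ℓ / (b : ℝ) ^ J ℓ) = 0 := by
  obtain ⟨ℓ, hℓ⟩ := Function.ne_iff.1 hj0
  simp only [haarPsiS, boxGrid]
  rw [← Finset.prod_univ_sum (fun ℓ => Finset.range (b ^ J ℓ))
    fun ℓ (a : ℕ) => haarPsi b (j ℓ) (i ℓ) (k ℓ) (a / (b : ℝ) ^ J ℓ)]
  exact Finset.prod_eq_zero (Finset.mem_univ ℓ) <| sum_haarPsi_div_pow_eq_zero hb hℓ (hj ℓ)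
    (Fintype.mem_piFinset.1 hi ℓ) (Fintype.mem_piFinset.1 hk ℓ)

theorem abs_haarPsiS_le (hb : 0 < b) (hi : i ∈ nablaIdxS b s j) (hk : k ∈ deltaIdxS b s j)
    (hx : ∀ ℓ, x ℓ ∈ Ico (0 : ℝ) 1) :
    |haarPsiS b s j i k x| ≤
      if boxIdx b (j - 1) x = k then (b : ℝ) ^ ((∑ ℓ, (j ℓ : ℝ)) / 2) else 0 := by
  calc |haarPsiS b s j i k x| = ∏ ℓ, |haarPsi b (j ℓ) (i ℓ) (k ℓ) (x ℓ)| := Finset.abs_prod _ _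
    _ ≤ ∏ ℓ, if cellIdx b (j ℓ - 1) (x ℓ) = k ℓ then (b : ℝ) ^ ((j ℓ : ℝ) / 2) else 0 := by
        gcongr with ℓ
        exact abs_haarPsi_le hb (Fintype.mem_piFinset.1 hi ℓ) (Fintype.mem_piFinset.1 hk ℓ) (hx ℓ)
    _ = _ := by
        rw [Finset.prod_ite_zero, Finset.sum_div, Real.rpow_sum_of_pos (by positivity)]
        simp [funext_iff, boxIdx]

theorem enorm_haarPsiS_le (hb : 0 < b) (hi : i ∈ nablaIdxS b s j) (hk : k ∈ deltaIdxS b s j)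
    (hx : ∀ ℓ, x ℓ ∈ Ico (0 : ℝ) 1) :
    ‖haarPsiS b s j i k x‖ₑ ≤
      if boxIdx b (j - 1) x = k then (b : ℝ≥0∞) ^ ((∑ ℓ, (j ℓ : ℝ)) / 2) else 0 := by
  rw [Real.enorm_eq_ofReal_abs]
  refine (ofReal_le_ofReal (abs_haarPsiS_le hb hi hk hx)).trans_eq ?_
  rw [apply_ite ENNReal.ofReal, ofReal_zero, ← ofReal_rpow_of_pos (by positivity), ofReal_natCast]

theorem sum_enorm_haarPsiS_le (hb : 0 < b) (j : Fin s → ℕ) (hx : ∀ ℓ, x ℓ ∈ Ico (0 : ℝ) 1) :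
    ∑ ki ∈ deltaIdxS b s j ×ˢ nablaIdxS b s j, ‖haarPsiS b s j ki.2 ki.1 x‖ₑ ≤
      (b : ℝ≥0∞) ^ s * (b : ℝ≥0∞) ^ ((∑ ℓ, (j ℓ : ℝ)) / 2) := by
  rw [Finset.sum_product_right]
  calc ∑ i ∈ nablaIdxS b s j, ∑ k ∈ deltaIdxS b s j, ‖haarPsiS b s j i k x‖ₑ
      ≤ ∑ _i ∈ nablaIdxS b s j, (b : ℝ≥0∞) ^ ((∑ ℓ, (j ℓ : ℝ)) / 2) := by
        refine Finset.sum_le_sum fun i hi => ?_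
        refine (Finset.sum_le_sum fun k hk => enorm_haarPsiS_le hb hi hk hx).trans ?_
        rw [Finset.sum_ite_eq]
        split_ifs <;> simp
    _ ≤ (b : ℝ≥0∞) ^ s * (b : ℝ≥0∞) ^ ((∑ ℓ, (j ℓ : ℝ)) / 2) := by
        rw [Finset.sum_const, nsmul_eq_mul]
        gcongr
        exact_mod_cast card_nablaIdxS_le hb j

end MultivariateHaar

section Nets

variable {b s t m : ℕ} {P : Multiset (Fin s → ℝ)} {j i k : Fin s → ℕ}

theorem IsNet.map_boxIdx (hb : 0 < b) (hP : IsNet b s t m P) {J : Fin s → ℕ}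
    (hJ : ∑ ℓ, J ℓ = m - t) : P.map (boxIdx b J) = b ^ t • (boxGrid b J).val := by
  classical
  ext a
  rw [Multiset.count_map, Multiset.count_nsmul]
  by_cases ha : a ∈ boxGrid b J
  · rw [Multiset.count_eq_one_of_mem (boxGrid b J).nodup ha, mul_one,
      ← hP.2.2 J a hJ (mem_boxGrid.1 ha)]
    congr 1
    refine Multiset.filter_congr fun x hx => ?_
    rw [mem_elemBox_iff hb fun ℓ => (hP.2.1 x hx ℓ).1, eq_comm]
  · rw [Multiset.count_eq_zero.2 ha, mul_zero, Multiset.card_eq_zero, Multiset.filter_eq_nil]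
    rintro x hx rfl
    exact ha (boxIdx_mem_boxGrid hb J fun ℓ => (hP.2.1 x hx ℓ).2)

theorem IsNet.sum_haarPsiS_eq_zero (hb : 0 < b) (hP : IsNet b s t m P) (hj0 : j ≠ 0)
    (hj : ∑ ℓ, j ℓ ≤ m - t) (hi : i ∈ nablaIdxS b s j) (hk : k ∈ deltaIdxS b s j) :
    (P.map (haarPsiS b s j i k)).sum = 0 := by
  obtain ⟨ℓ₀, -⟩ := Function.ne_iff.1 hj0
  let J : Fin s → ℕ := j + Pi.single ℓ₀ (m - t - ∑ ℓ, j ℓ)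
  have hjJ : j ≤ J := le_self_add
  have hJ : ∑ ℓ, J ℓ = m - t := by
    simp [J, Finset.sum_add_distrib, Nat.add_sub_cancel' hj]
  calc (P.map (haarPsiS b s j i k)).sum
      = ((P.map (boxIdx b J)).map fun a =>
          haarPsiS b s j i k fun ℓ => a ℓ / (b : ℝ) ^ J ℓ).sum := by
        rw [Multiset.map_map]
        exact congrArg _ <| Multiset.map_congr rfl fun x hx =>
          (haarPsiS_boxIdx_div_pow hb hjJ (hP.2.1 x hx)).symm
    _ = b ^ t • ∑ a ∈ boxGrid b J, haarPsiS b s j i k fun ℓ => a ℓ / (b : ℝ) ^ J ℓ := by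
        rw [hP.map_boxIdx hb hJ, Multiset.map_nsmul, Multiset.sum_nsmul]
        rfl
    _ = 0 := by rw [sum_haarPsiS_div_pow_eq_zero hb hj0 hjJ hi hk, smul_zero]

theorem IsNet.countP_boxIdx_eq (hb : 0 < b) (hP : IsNet b s t m P) {I J c : Fin s → ℕ}
    (hIJ : I ≤ J) (hJ : ∑ ℓ, J ℓ = m - t) (hc : c ∈ boxGrid b I) :
    P.countP (boxIdx b I · = c) = b ^ t * b ^ ∑ ℓ, (J ℓ - I ℓ) := by
  calc P.countP (boxIdx b I · = c)
      = (P.map (boxIdx b J)).countP fun a => (fun ℓ => a ℓ / b ^ (J ℓ - I ℓ)) = c := by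
        rw [Multiset.countP_map, ← Multiset.countP_eq_card_filter]
        simp only [boxIdx_div_pow hb hIJ]
    _ = b ^ t * ((boxGrid b J).filter fun a => (fun ℓ => a ℓ / b ^ (J ℓ - I ℓ)) = c).card := by
        rw [hP.map_boxIdx hb hJ, Multiset.countP_nsmul, Multiset.countP_eq_card_filter]
        rfl
    _ = b ^ t * b ^ ∑ ℓ, (J ℓ - I ℓ) := by rw [card_filter_boxGrid_div_eq hb hIJ hc]

theorem IsNet.countP_boxIdx_pred_le (hb : 0 < b) (hP : IsNet b s t m P)
    (hj : m - t ≤ ∑ ℓ, j ℓ) (k : Fin s → ℕ) :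
    P.countP (boxIdx b (j - 1) · = k) ≤ b ^ (t + s) := by
  obtain hzero | hpos := (P.countP (boxIdx b (j - 1) · = k)).eq_zero_or_pos
  · exact hzero ▸ zero_le
  obtain ⟨x₀, hx₀, rfl⟩ := Multiset.countP_pos.1 hpos
  obtain ⟨J, hJj, hJ⟩ := exists_le_sum_eq hj
  have hsub : J - 1 ≤ j - 1 := fun ℓ => Nat.sub_le_sub_right (hJj ℓ) 1
  calc P.countP (boxIdx b (j - 1) · = boxIdx b (j - 1) x₀)
      ≤ P.countP (boxIdx b (J - 1) · = boxIdx b (J - 1) x₀) := by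
        simp only [Multiset.countP_eq_card_filter]
        refine Multiset.card_le_card <| Multiset.monotone_filter_right P fun x hx => ?_
        rw [← boxIdx_div_pow hb hsub, hx, boxIdx_div_pow hb hsub]
    _ = b ^ t * b ^ ∑ ℓ, (J ℓ - (J - 1) ℓ) :=
        hP.countP_boxIdx_eq hb (fun ℓ => Nat.sub_le _ _) hJ
          (boxIdx_mem_boxGrid hb _ fun ℓ => (hP.2.1 x₀ hx₀ ℓ).2)
    _ ≤ b ^ (t + s) := by
        rw [pow_add]
        gcongr b ^ t * b ^ ?_
        calc ∑ ℓ, (J ℓ - (J - 1) ℓ) ≤ ∑ _ℓ : Fin s, 1 :=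
              Finset.sum_le_sum fun ℓ _ => tsub_tsub_le
          _ = s := by simp

theorem IsNet.sum_map_enorm_haarPsiS_le (hb : 0 < b) (hP : IsNet b s t m P)
    (hj : m - t ≤ ∑ ℓ, j ℓ) (hi : i ∈ nablaIdxS b s j) (hk : k ∈ deltaIdxS b s j) :
    (P.map fun x => ‖haarPsiS b s j i k x‖ₑ).sum ≤
      (b : ℝ≥0∞) ^ (t + s) * (b : ℝ≥0∞) ^ ((∑ ℓ, (j ℓ : ℝ)) / 2) := by
  refine (Multiset.sum_map_le_sum_map _ _ fun x hx =>
    enorm_haarPsiS_le hb hi hk (hP.2.1 x hx)).trans ?_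
  rw [sum_map_ite_eq_countP_nsmul, nsmul_eq_mul]
  gcongr
  exact_mod_cast hP.countP_boxIdx_pred_le hb hj k

theorem IsNet.sum_sum_map_enorm_haarPsiS_le (hb : 0 < b) (hP : IsNet b s t m P) (j : Fin s → ℕ) :
    ∑ ki ∈ deltaIdxS b s j ×ˢ nablaIdxS b s j, (P.map fun x => ‖haarPsiS b s j ki.2 ki.1 x‖ₑ).sum ≤
      (b : ℝ≥0∞) ^ (m + s) * (b : ℝ≥0∞) ^ ((∑ ℓ, (j ℓ : ℝ)) / 2) := by
  rw [← Multiset.sum_map_sum]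
  refine (Multiset.sum_map_le_sum_map _ _ fun x hx =>
    sum_enorm_haarPsiS_le hb j (hP.2.1 x hx)).trans_eq ?_
  rw [Multiset.map_const', Multiset.sum_replicate, hP.1, nsmul_eq_mul, pow_add, mul_assoc]
  norm_cast

end Nets

section HaarExpansion

variable {b s t m : ℕ} {P : Multiset (Fin s → ℝ)} {f : (Fin s → ℝ) → ℝ} {j : Fin s → ℕ}

/-- The level-`j` part `∑_{k,i} ⟨f, Ψ^j_{i,k}⟩ Ψ^j_{i,k}` of the wavelet expansion of `f`. -/
def haarPart (b s : ℕ) (f : (Fin s → ℝ) → ℝ) (j : Fin s → ℕ) (x : Fin s → ℝ) : ℝ :=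
  ∑ k ∈ deltaIdxS b s j, ∑ i ∈ nablaIdxS b s j, haarCoef b s f j i k * haarPsiS b s j i k x

/-- The weighted `ℓ^p` norm of the level-`j` Haar coefficients of `f`, whose `ℓ^q` norm over all
levels `j` is the Haar wavelet norm. -/
def wavLevel (b s : ℕ) (α : ℝ) (p : ℝ≥0∞) (f : (Fin s → ℝ) → ℝ) (j : Fin s → ℕ) : ℝ≥0∞ :=
  ENNReal.ofReal ((b : ℝ) ^ ((α - 1 / p.toReal + 1 / 2) * ∑ ℓ, (j ℓ : ℝ))) *
    lpIdx p (deltaIdxS b s j ×ˢ nablaIdxS b s j)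
      (fun ki => ENNReal.ofReal |haarCoef b s f j ki.2 ki.1|)

theorem haarPart_zero (b : ℕ) (f : (Fin s → ℝ) → ℝ) {x : Fin s → ℝ}
    (hx : ∀ ℓ, x ℓ ∈ Ico (0 : ℝ) 1) : haarPart b s f 0 x = haarCoef b s f 0 0 0 := by
  have hdelta : deltaIdxS b s 0 = {0} := by ext; simp [deltaIdxS, deltaIdx, funext_iff]
  have hnabla : nablaIdxS b s 0 = {0} := by ext; simp [nablaIdxS, nablaIdx, funext_iff]
  simp [haarPart, hdelta, hnabla, haarPsiS_zero hx]

theorem setIntegral_cube_eq_haarCoef_zero (b : ℕ) (f : (Fin s → ℝ) → ℝ) :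
    ∫ x in cube s, f x = haarCoef b s f 0 0 0 := by
  have hIco : (univ.pi fun _ : Fin s => Ico (0 : ℝ) 1) =ᵐ[volume] cube s :=
    Measure.univ_pi_Ico_ae_eq_Icc
  rw [haarCoef, ← setIntegral_congr_set hIco, ← setIntegral_congr_set hIco]
  refine setIntegral_congr_fun (MeasurableSet.univ_pi fun _ => measurableSet_Ico) fun x hx => ?_
  rw [haarPsiS_zero fun ℓ => hx ℓ (mem_univ ℓ), mul_one]

theorem IsNet.sum_map_haarPart_zero (hP : IsNet b s t m P) (f : (Fin s → ℝ) → ℝ) :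
    (P.map (haarPart b s f 0)).sum = (b : ℝ) ^ m * ∫ x in cube s, f x := by
  rw [setIntegral_cube_eq_haarCoef_zero b,
    Multiset.map_congr rfl fun x hx => haarPart_zero b f (hP.2.1 x hx), Multiset.map_const',
    Multiset.sum_replicate, hP.1, nsmul_eq_mul, Nat.cast_pow]

theorem IsNet.sum_map_haarPart_eq_zero (hb : 0 < b) (hP : IsNet b s t m P)
    (f : (Fin s → ℝ) → ℝ) (hj0 : j ≠ 0) (hj : ∑ ℓ, j ℓ ≤ m - t) :
    (P.map (haarPart b s f j)).sum = 0 := by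
  unfold haarPart
  simp only [Multiset.sum_map_sum, Multiset.sum_map_mul_left]
  exact Finset.sum_eq_zero fun k hk => Finset.sum_eq_zero fun i hi => by
    rw [hP.sum_haarPsiS_eq_zero hb hj0 hj hi hk, mul_zero]

theorem sum_map_enorm_haarPart_le_sum_mul (b : ℕ) (P : Multiset (Fin s → ℝ)) (f : (Fin s → ℝ) → ℝ)
    (j : Fin s → ℕ) :
    (P.map fun x => ‖haarPart b s f j x‖ₑ).sum ≤
      ∑ ki ∈ deltaIdxS b s j ×ˢ nablaIdxS b s j,
        ‖haarCoef b s f j ki.2 ki.1‖ₑ * (P.map fun x => ‖haarPsiS b s j ki.2 ki.1 x‖ₑ).sum := by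
  rw [← Finset.sum_congr rfl fun ki _ => Multiset.sum_map_mul_left, ← Multiset.sum_map_sum]
  refine Multiset.sum_map_le_sum_map _ _ fun x _ => ?_
  rw [haarPart, ← Finset.sum_product']
  simp only [← enorm_mul]
  exact enorm_sum_le _ _

theorem wavLevel_mul_pow (hb : 0 < b) (α : ℝ) (p : ℝ≥0∞) (f : (Fin s → ℝ) → ℝ)
    (j : Fin s → ℕ) :
    wavLevel b s α p f j * ((b : ℝ≥0∞) ^ (-(α - 1 / p.toReal))) ^ ∑ ℓ, j ℓ =
      (b : ℝ≥0∞) ^ ((∑ ℓ, (j ℓ : ℝ)) / 2) *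
        lpIdx p (deltaIdxS b s j ×ˢ nablaIdxS b s j)
          fun ki => ‖haarCoef b s f j ki.2 ki.1‖ₑ := by
  have hb0 : (b : ℝ≥0∞) ≠ 0 := by exact_mod_cast hb.ne'
  simp only [wavLevel, Real.enorm_eq_ofReal_abs]
  rw [← ofReal_rpow_of_pos (by positivity), ofReal_natCast, ← rpow_mul_natCast, mul_right_comm,
    ← ENNReal.rpow_add _ _ hb0 (natCast_ne_top b)]
  congr 2
  push_cast
  ring

/-- Each weight `∑_{x ∈ P} |Ψ^j_{i,k}(x)|` is at most `b^{t+s+|j|/2}`, while all of them together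
are at most `b^{m+s+|j|/2}`; the estimate interpolates between the two. -/
theorem IsNet.sum_map_enorm_haarPart_le (hb : 0 < b) (hP : IsNet b s t m P) (α : ℝ) {p : ℝ≥0∞}
    (hp : 1 ≤ p) (f : (Fin s → ℝ) → ℝ) (hj : m - t ≤ ∑ ℓ, j ℓ) :
    (P.map fun x => ‖haarPart b s f j x‖ₑ).sum ≤
      (b : ℝ≥0∞) ^ (s + t * (1 / p.toReal) + m * (1 - 1 / p.toReal)) *
        (wavLevel b s α p f j * ((b : ℝ≥0∞) ^ (-(α - 1 / p.toReal))) ^ ∑ ℓ, j ℓ) := by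
  have hb0 : (b : ℝ≥0∞) ≠ 0 := by exact_mod_cast hb.ne'
  have hbtop : (b : ℝ≥0∞) ≠ ∞ := natCast_ne_top b
  refine (sum_map_enorm_haarPart_le_sum_mul b P f j).trans <|
    (sum_mul_le_lpIdx_mul hp _ _
      (fun ki hki => hP.sum_map_enorm_haarPsiS_le hb hj (Finset.mem_product.1 hki).2
        (Finset.mem_product.1 hki).1)
      (hP.sum_sum_map_enorm_haarPsiS_le hb j)).trans_eq ?_
  rw [wavLevel_mul_pow hb, mul_comm, ← mul_assoc]
  congr 1
  simp only [← rpow_natCast, ← ENNReal.rpow_add _ _ hb0 hbtop, ← rpow_mul]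
  congr 1
  push_cast
  ring

end HaarExpansion

section IntegrationError

variable {b s t m : ℕ} {P : Multiset (Fin s → ℝ)}

theorem IsNet.enorm_integral_sub_le (hb : 0 < b) (hP : IsNet b s t m P) (f : (Fin s → ℝ) → ℝ) :
    ‖(∫ x in cube s, f x) - ((b : ℝ) ^ m)⁻¹ * (P.map (wavExp b s f)).sum‖ₑ ≤
      ((b : ℝ≥0∞) ^ m)⁻¹ * ∑' j : {j : Fin s → ℕ // m - t ≤ ∑ ℓ, j ℓ},
        (P.map fun x => ‖haarPart b s f j x‖ₑ).sum := by
  have hbm : (b : ℝ) ^ m ≠ 0 := by positivity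
  obtain htop | htop := eq_or_ne (∑' j : {j : Fin s → ℕ // m - t ≤ ∑ ℓ, j ℓ},
      (P.map fun x => ‖haarPart b s f j x‖ₑ).sum) ∞
  · simp [htop, mul_top]
  have hsummable : ∀ x ∈ P, Summable fun j => haarPart b s f j x := fun x hx =>
    summable_of_tsum_enorm_tail_ne_top <| ne_top_of_le_ne_top htop <| ENNReal.tsum_le_tsum fun j =>
      Multiset.le_sum_of_mem <| Multiset.mem_map_of_mem (fun x => ‖haarPart b s f j x‖ₑ) hx
  have hexp : HasSum (fun j => (P.map (haarPart b s f j)).sum) (P.map (wavExp b s f)).sum :=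
    hasSum_sum_map fun x hx => (hsummable x hx).hasSum
  have herr : (∫ x in cube s, f x) - ((b : ℝ) ^ m)⁻¹ * (P.map (wavExp b s f)).sum =
      -(((b : ℝ) ^ m)⁻¹ *
        (∑' j, (P.map (haarPart b s f j)).sum - (P.map (haarPart b s f 0)).sum)) := by
    rw [hexp.tsum_eq, hP.sum_map_haarPart_zero]
    field_simp
    ring
  rw [herr, enorm_neg, enorm_mul, enorm_inv hbm, enorm_pow, Real.enorm_natCast]
  gcongr
  refine (enorm_tsum_sub_le_tsum_enorm (A := {j : Fin s → ℕ | m - t ≤ ∑ ℓ, j ℓ}) hexp.summable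
    fun j hj hj0 => hP.sum_map_haarPart_eq_zero hb f hj0 (le_of_not_ge hj)).trans ?_
  refine ENNReal.tsum_le_tsum fun j => (enorm_multisetSum_le _).trans_eq ?_
  rw [Multiset.map_map]
  rfl

theorem IsNet.enorm_integral_sub_le_wavNorm_mul (hb : 0 < b) (hP : IsNet b s t m P) (α : ℝ)
    {p : ℝ≥0∞} (hp : 1 ≤ p) (q q' : ℝ≥0∞) [HolderConjugate q q'] (f : (Fin s → ℝ) → ℝ) :
    ‖(∫ x in cube s, f x) - ((b : ℝ) ^ m)⁻¹ * (P.map (wavExp b s f)).sum‖ₑ ≤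
      (b : ℝ≥0∞) ^ (s + (t - m) * (1 / p.toReal)) *
        (wavNorm b s α p q f * lqIdx q' fun j : {j : Fin s → ℕ // m - t ≤ ∑ ℓ, j ℓ} =>
          ((b : ℝ≥0∞) ^ (-(α - 1 / p.toReal))) ^ ∑ ℓ, j.1 ℓ) := by
  have hb0 : (b : ℝ≥0∞) ≠ 0 := by exact_mod_cast hb.ne'
  have hscale : ((b : ℝ≥0∞) ^ m)⁻¹ *
      (b : ℝ≥0∞) ^ (s + t * (1 / p.toReal) + m * (1 - 1 / p.toReal)) =
      (b : ℝ≥0∞) ^ (s + (t - m) * (1 / p.toReal)) := by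
    rw [← rpow_natCast, ← rpow_neg, ← ENNReal.rpow_add _ _ hb0 (natCast_ne_top b)]
    ring_nf
  have hholder : ∑' j : {j : Fin s → ℕ // m - t ≤ ∑ ℓ, j ℓ},
      wavLevel b s α p f j * ((b : ℝ≥0∞) ^ (-(α - 1 / p.toReal))) ^ ∑ ℓ, j.1 ℓ ≤
      wavNorm b s α p q f * lqIdx q' fun j : {j : Fin s → ℕ // m - t ≤ ∑ ℓ, j ℓ} =>
        ((b : ℝ≥0∞) ^ (-(α - 1 / p.toReal))) ^ ∑ ℓ, j.1 ℓ := by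
    refine (tsum_mul_le_lqIdx_mul_lqIdx q q' _ _).trans ?_
    gcongr
    exact lqIdx_comp_le_of_injective q (wavLevel b s α p f) Subtype.val_injective
  calc _ ≤ ((b : ℝ≥0∞) ^ m)⁻¹ * ∑' j : {j : Fin s → ℕ // m - t ≤ ∑ ℓ, j ℓ},
        (P.map fun x => ‖haarPart b s f j x‖ₑ).sum := hP.enorm_integral_sub_le hb f
    _ ≤ ((b : ℝ≥0∞) ^ m)⁻¹ * ∑' j : {j : Fin s → ℕ // m - t ≤ ∑ ℓ, j ℓ},
        (b : ℝ≥0∞) ^ (s + t * (1 / p.toReal) + m * (1 - 1 / p.toReal)) *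
          (wavLevel b s α p f j * ((b : ℝ≥0∞) ^ (-(α - 1 / p.toReal))) ^ ∑ ℓ, j.1 ℓ) := by
        gcongr with j
        exact hP.sum_map_enorm_haarPart_le hb α hp f j.2
    _ ≤ _ := by
        rw [ENNReal.tsum_mul_left, ← mul_assoc, hscale]
        gcongr

theorem exists_enorm_integral_sub_le (hb : 1 < b) (hs : s ≠ 0) (t : ℕ) {α : ℝ} {p : ℝ≥0∞}
    (hp : 1 ≤ p) (q q' : ℝ≥0∞) [HolderConjugate q q'] (hα : 1 / p.toReal ≤ α)
    (hα' : q' ≠ ∞ → 1 / p.toReal < α) :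
    ∃ C ≠ ∞, ∀ m, t ≤ m → ∀ P, IsNet b s t m P → ∀ f : (Fin s → ℝ) → ℝ,
      ‖(∫ x in cube s, f x) - ((b : ℝ) ^ m)⁻¹ * (P.map (wavExp b s f)).sum‖ₑ ≤
        C * ((b : ℝ≥0∞) ^ m) ^ (-α) *
          (((m - t : ℕ) : ℝ≥0∞) + 1) ^ ((s - 1 : ℝ) * (1 / q'.toReal)) * wavNorm b s α p q f := by
  have hb0 : (b : ℝ≥0∞) ≠ 0 := by exact_mod_cast (zero_lt_one.trans hb).ne'
  have hbtop : (b : ℝ≥0∞) ≠ ∞ := natCast_ne_top b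
  have hb1 : (1 : ℝ≥0∞) < b := by exact_mod_cast hb
  obtain ⟨C, hC, hlq⟩ := exists_lqIdx_pow_sum_le hs (HolderConjugate.ne_zero q' q)
    (r := (b : ℝ≥0∞) ^ (-(α - 1 / p.toReal)))
    ((rpow_le_rpow_of_exponent_le hb1.le (by linarith)).trans_eq ENNReal.rpow_zero)
    fun hq' => rpow_lt_one_of_one_lt_of_neg hb1 (by linarith [hα' hq'])
  refine ⟨(b : ℝ≥0∞) ^ (s + α * t) * C, mul_ne_top (rpow_ne_top_of_ne_zero hb0 hbtop) hC,
    fun m hm P hP f => ?_⟩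
  have hscale : (b : ℝ≥0∞) ^ (s + (t - m) * (1 / p.toReal)) *
      ((b : ℝ≥0∞) ^ (-(α - 1 / p.toReal))) ^ (m - t) =
      (b : ℝ≥0∞) ^ (s + α * t) * ((b : ℝ≥0∞) ^ m) ^ (-α) := by
    rw [← rpow_mul_natCast, ← rpow_natCast_mul, ← ENNReal.rpow_add _ _ hb0 hbtop,
      ← ENNReal.rpow_add _ _ hb0 hbtop, Nat.cast_sub hm]
    ring_nf
  refine (hP.enorm_integral_sub_le_wavNorm_mul (zero_lt_one.trans hb) α hp q q' f).trans ?_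
  calc _ ≤ (b : ℝ≥0∞) ^ (s + (t - m) * (1 / p.toReal)) * (wavNorm b s α p q f *
        (C * (((b : ℝ≥0∞) ^ (-(α - 1 / p.toReal))) ^ (m - t) *
          (((m - t : ℕ) : ℝ≥0∞) + 1) ^ ((s - 1 : ℝ) * (1 / q'.toReal))))) := by
        gcongr
        exact hlq (m - t)
    _ = (b : ℝ≥0∞) ^ (s + (t - m) * (1 / p.toReal)) *
        ((b : ℝ≥0∞) ^ (-(α - 1 / p.toReal))) ^ (m - t) * C *
          (((m - t : ℕ) : ℝ≥0∞) + 1) ^ ((s - 1 : ℝ) * (1 / q'.toReal)) * wavNorm b s α p q f := by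
        ring
    _ = _ := by rw [hscale]; ring

theorem exists_abs_integral_sub_le (hb : 1 < b) (hs : s ≠ 0) (t : ℕ) {α : ℝ} {p : ℝ≥0∞}
    (hp : 1 ≤ p) (q q' : ℝ≥0∞) [HolderConjugate q q'] (hα : 1 / p.toReal ≤ α)
    (hα' : q' ≠ ∞ → 1 / p.toReal < α) :
    ∃ C > 0, ∀ m, t ≤ m → ∀ P, IsNet b s t m P → ∀ f : (Fin s → ℝ) → ℝ, wavNorm b s α p q f ≤ 1 →
      |(∫ x in cube s, f x) - ((b : ℝ) ^ m)⁻¹ * (P.map (wavExp b s f)).sum| ≤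
        C * ((b : ℝ) ^ m) ^ (-α) * (((m - t : ℕ) : ℝ) + 1) ^ ((s - 1 : ℝ) * (1 / q'.toReal)) := by
  obtain ⟨C, hC, herr⟩ := exists_enorm_integral_sub_le hb hs t hp q q' hα hα'
  refine ⟨C.toReal + 1, by positivity, fun m hm P hP f hf => ?_⟩
  have herr_real := toReal_mono
    (mul_ne_top (mul_ne_top hC (rpow_ne_top_of_ne_zero (by positivity) (by finiteness)))
      (by finiteness))
    ((herr m hm P hP f).trans (mul_le_of_le_one_right' hf))
  rw [toReal_enorm, Real.norm_eq_abs, toReal_mul, toReal_mul, ← toReal_rpow, ← toReal_rpow,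
    toReal_pow, toReal_natCast, ← Nat.cast_add_one, toReal_natCast, Nat.cast_add_one] at herr_real
  refine herr_real.trans ?_
  gcongr
  exact le_add_of_nonneg_right zero_le_one

theorem natCast_sub_add_one_le_mul_log_pow (hb : 1 < b) (hm : 1 ≤ m) (t : ℕ) :
    ((m - t : ℕ) : ℝ) + 1 ≤ 2 / Real.log b * Real.log ((b : ℝ) ^ m) := by
  have hlog : 0 < Real.log b := Real.log_pos (by exact_mod_cast hb)
  have hnat : m - t + 1 ≤ 2 * m := by omega
  rw [Real.log_pow, mul_left_comm, div_mul_cancel₀ _ hlog.ne', mul_comm]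
  exact_mod_cast hnat

end IntegrationError

/-- QMC rules based on arbitrary `(t,m,s)`-nets achieve the convergence rate
`N^{-α} (ln N)^{(s-1)/q'}` on the Haar wavelet space `H_{wav,α,s,p,q}`. -/
theorem net_upper_bound_Haar (b s t : ℕ) (hb : 2 ≤ b) (hs : 1 ≤ s)
    (p q q' : ℝ≥0∞) (hp : 1 ≤ p) (hq : 1 ≤ q) (hq' : 1 / q + 1 / q' = 1)
    (α : ℝ) (hα1 : q = 1 → 1 / p.toReal ≤ α) (hα2 : 1 < q → 1 / p.toReal < α) :
    ∃ C > (0:ℝ), ∀ m : ℕ, max 1 t ≤ m → ∀ P : Multiset (Fin s → ℝ), IsNet b s t m P →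
      ∀ f : (Fin s → ℝ) → ℝ, Integrable f (volume.restrict (cube s)) →
        wavNorm b s α p q f ≤ 1 →
        |(∫ x in cube s, f x) - ((b : ℝ) ^ m)⁻¹ * (P.map (wavExp b s f)).sum| ≤
          C * ((b : ℝ) ^ m) ^ (-α) * Real.log ((b : ℝ) ^ m) ^ ((s - 1 : ℝ) * (1 / q').toReal) := by
  have : HolderConjugate q q' := holderConjugate_iff.2 (by simpa only [one_div] using hq')
  have hα : 1 / p.toReal ≤ α := hq.eq_or_lt.elim (fun h => hα1 h.symm) fun h => (hα2 h).le
  have hα' : q' ≠ ∞ → 1 / p.toReal < α := fun h =>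
    hα2 ((HolderConjugate.lt_top_iff_one_lt q' q).1 h.lt_top)
  obtain ⟨C, hC, herr⟩ :=
    exists_abs_integral_sub_le hb (Nat.one_le_iff_ne_zero.1 hs) t hp q q' hα hα'
  have hlogb : 0 < Real.log b := Real.log_pos (by exact_mod_cast hb)
  rw [one_div q', toReal_inv, ← one_div]
  set e : ℝ := (s - 1 : ℝ) * (1 / q'.toReal)
  have he : 0 ≤ e := mul_nonneg (sub_nonneg.2 (by exact_mod_cast hs)) (by positivity)
  refine ⟨C * (2 / Real.log b) ^ e, by positivity, fun m hm P hP f _ hf => ?_⟩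
  calc |(∫ x in cube s, f x) - ((b : ℝ) ^ m)⁻¹ * (P.map (wavExp b s f)).sum|
      ≤ C * ((b : ℝ) ^ m) ^ (-α) * (((m - t : ℕ) : ℝ) + 1) ^ e :=
        herr m (le_of_max_le_right hm) P hP f hf
    _ ≤ C * ((b : ℝ) ^ m) ^ (-α) * (2 / Real.log b * Real.log ((b : ℝ) ^ m)) ^ e := by
        gcongr
        exact natCast_sub_add_one_le_mul_log_pow hb (le_of_max_le_left hm) t
    _ = C * (2 / Real.log b) ^ e * ((b : ℝ) ^ m) ^ (-α) * Real.log ((b : ℝ) ^ m) ^ e := by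
        rw [Real.mul_rpow (by positivity) (by rw [Real.log_pow]; positivity)]
        ring

end
end

section
/- Fix an integer base b ≥ 2, p ∈ [1,∞] and q ∈ [1,∞), and let f : [0,1] → ℝ be the identity function f(x) = x. Then ⟨f, ψ^0_{0,0}⟩ = 1/2 and ⟨f, ψ^j_{i,k}⟩ = (2i+1−b) b^{−3j/2}/2 for all j ≥ 1, i ∈ ∇_j, k ∈ Δ_{j−1}; consequently, for α ∈ ℝ the Haar wavelet norm ‖f‖_{wav,α,p,q} is finite if and only if α < 1. In particular, the identity function, which belongs to H_{1,p} (being an absolutely continuous function with derivative 1_{[0,1)} ∈ L_p), does not belong to the Haar wavelet space H_{wav,α,p,q} for any α ≥ 1. -/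
open MeasureTheory ENNReal Set

noncomputable section

/-- The Haar coefficient `⟨f, ψ^j_{i,k}⟩ = ∫_0^1 f ψ^j_{i,k}`. -/
def haarCoefU (b : ℕ) (f : ℝ → ℝ) (j i k : ℕ) : ℝ :=
  ∫ x in Set.Icc (0:ℝ) 1, f x * haarPsi b j i k x

/-- The univariate Haar wavelet norm `‖f‖_{wav,α,p,q}`. -/
def wavNormU (b : ℕ) (α : ℝ) (p q : ℝ≥0∞) (f : ℝ → ℝ) : ℝ≥0∞ :=
  lqIdx q fun j : ℕ =>
    ENNReal.ofReal ((b : ℝ) ^ ((α - 1 / p.toReal + 1 / 2) * (j : ℝ))) *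
      lpIdx p (deltaIdx b j ×ˢ nablaIdx b j)
        (fun ki => ENNReal.ofReal |haarCoefU b f j ki.2 ki.1|)

/-- The pointwise wavelet expansion `S(f)`. -/
def wavExpU (b : ℕ) (f : ℝ → ℝ) (x : ℝ) : ℝ :=
  ∑' j : ℕ, ∑ k ∈ deltaIdx b j, ∑ i ∈ nablaIdx b j,
    haarCoefU b f j i k * haarPsi b j i k x

/-!
The support of `ψ^j_{i,k}` is `b` times as long as its `i`-th cell, so for `f x = x` the dependence
on `k` cancels in `b ∫_cell f - ∫_support f`, and the coefficient is `c_i b ^ (-s j)` with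
`s = 3 / 2`. Given any such coefficients, the `b ^ (j - 1)` positions `k` of level `j` multiply the
`ℓ^p` norm of `(c_i b ^ (-s j))_i` by `b ^ ((j - 1) / p)`, which absorbs the factor `b ^ (-j / p)`
of the weight. The weighted level norms thus form a geometric sequence of ratio
`b ^ (α + 1 / 2 - s)`, which is `ℓ^q` summable iff `α < s - 1 / 2`.
-/

theorem deltaIdx_succ (b n : ℕ) : deltaIdx b (n + 1) = Finset.range (b ^ n) := by
  simp [deltaIdx]

theorem nablaIdx_of_ne_zero (b : ℕ) {j : ℕ} (hj : j ≠ 0) : nablaIdx b j = Finset.range b :=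
  if_neg hj

theorem integrableOn_mul_indicator_one {X : Type*} [MeasurableSpace X] {μ : Measure X}
    {f : X → ℝ} {s t : Set X} (hf : IntegrableOn f s μ) (ht : MeasurableSet t) :
    IntegrableOn (fun x => f x * t.indicator (fun _ => (1 : ℝ)) x) s μ := by
  simpa only [← Set.indicator_mul_right, mul_one] using hf.indicator ht

theorem setIntegral_Icc_mul_indicator_Ico (f : ℝ → ℝ) {u a c v : ℝ} (hua : u ≤ a) (hac : a ≤ c)
    (hcv : c ≤ v) :
    ∫ x in Icc u v, f x * (Ico a c).indicator (fun _ => (1 : ℝ)) x = ∫ x in a..c, f x := by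
  have hsub : Ico a c ⊆ Icc u v := Ico_subset_Icc_self.trans (Icc_subset_Icc hua hcv)
  simp only [← Set.indicator_mul_right, mul_one]
  rw [setIntegral_indicator measurableSet_Ico, inter_eq_right.2 hsub,
    integral_Ico_eq_integral_Ioc, intervalIntegral.integral_of_le hac]

theorem haarCoefU_zero (b : ℕ) (f : ℝ → ℝ) (i k : ℕ) :
    haarCoefU b f 0 i k = ∫ x in (0 : ℝ)..1, f x := by
  simpa only [haarCoefU, haarPsi, if_true] using
    setIntegral_Icc_mul_indicator_Ico f le_rfl zero_le_one le_rfl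

theorem rpow_one_sub_eq_rpow_neg_mul {x : ℝ} (hx : x ≠ 0) (t : ℝ) :
    x ^ (1 - t) = x ^ (-t) * x := by
  rw [← Real.rpow_add_one hx, neg_add_eq_sub]

section Coefficients

variable {b j i k : ℕ}

theorem base_pos_of_mem_nablaIdx (hj : j ≠ 0) (hi : i ∈ nablaIdx b j) : 0 < b := by
  rw [nablaIdx_of_ne_zero b hj, Finset.mem_range] at hi
  exact i.zero_le.trans_lt hi

theorem rpow_one_sub_mul_le_one_of_mem_deltaIdx (hj : j ≠ 0) (hk : k ∈ deltaIdx b j) :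
    (b : ℝ) ^ (1 - (j : ℝ)) * (k + 1) ≤ 1 := by
  obtain ⟨n, rfl⟩ := Nat.exists_eq_succ_of_ne_zero hj
  have hk' : (k : ℝ) + 1 ≤ (b : ℝ) ^ n := by
    rw [deltaIdx_succ, Finset.mem_range] at hk
    exact_mod_cast hk
  have hexp : (b : ℝ) ^ (1 - ((n + 1 : ℕ) : ℝ)) = ((b : ℝ) ^ n)⁻¹ := by
    rw [Nat.cast_succ, sub_add_cancel_right, Real.rpow_neg b.cast_nonneg, Real.rpow_natCast]
  rw [hexp]
  exact inv_mul_le_one_of_le₀ hk' (by positivity)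

theorem rpow_neg_mul_le_rpow_one_sub_mul_of_mem_nablaIdx (k : ℕ) (hj : j ≠ 0)
    (hi : i ∈ nablaIdx b j) :
    (b : ℝ) ^ (-(j : ℝ)) * (b * k + i + 1) ≤ (b : ℝ) ^ (1 - (j : ℝ)) * (k + 1) := by
  rw [nablaIdx_of_ne_zero b hj, Finset.mem_range] at hi
  have hi' : (i : ℝ) + 1 ≤ b := by exact_mod_cast hi
  rw [rpow_one_sub_eq_rpow_neg_mul (Nat.cast_ne_zero.2 (by lia)), mul_assoc]
  gcongr
  linarith

theorem haarCoefU_of_ne_zero {f : ℝ → ℝ} (hf : IntegrableOn f (Icc 0 1)) (hj : j ≠ 0)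
    (hi : i ∈ nablaIdx b j) (hk : k ∈ deltaIdx b j) :
    haarCoefU b f j i k = (b : ℝ) ^ ((j : ℝ) / 2 - 1) *
      (b * (∫ x in (b : ℝ) ^ (-(j : ℝ)) * (b * k + i)..(b : ℝ) ^ (-(j : ℝ)) * (b * k + i + 1), f x)
        - ∫ x in (b : ℝ) ^ (1 - (j : ℝ)) * k..(b : ℝ) ^ (1 - (j : ℝ)) * (k + 1), f x) := by
  have hsupport := rpow_one_sub_mul_le_one_of_mem_deltaIdx hj hk
  have hcell := (rpow_neg_mul_le_rpow_one_sub_mul_of_mem_nablaIdx k hj hi).trans hsupport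
  simp only [haarCoefU, haarPsi, if_neg hj, mul_left_comm (f _), mul_sub (f _)]
  rw [integral_const_mul,
    integral_sub ((integrableOn_mul_indicator_one hf measurableSet_Ico).const_mul _)
      (integrableOn_mul_indicator_one hf measurableSet_Ico),
    integral_const_mul,
    setIntegral_Icc_mul_indicator_Ico f (by positivity) (by gcongr ?_ * ?_; linarith) hcell,
    setIntegral_Icc_mul_indicator_Ico f (by positivity) (by gcongr ?_ * ?_; linarith) hsupport]

theorem haarCoefU_id (hj : j ≠ 0) (hi : i ∈ nablaIdx b j) (hk : k ∈ deltaIdx b j) :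
    haarCoefU b (fun x => x) j i k =
      (2 * (i : ℝ) + 1 - (b : ℝ)) * (b : ℝ) ^ (-(3 / 2 : ℝ) * (j : ℝ)) / 2 := by
  have hb0 : (0 : ℝ) < b := Nat.cast_pos.2 (base_pos_of_mem_nablaIdx hj hi)
  rw [haarCoefU_of_ne_zero (f := fun x => x) continuous_id.integrableOn_Icc hj hi hk, integral_id,
    integral_id, rpow_one_sub_eq_rpow_neg_mul hb0.ne']
  have hscale : (b : ℝ) ^ (-(3 / 2 : ℝ) * j) =
      (b : ℝ) ^ ((j : ℝ) / 2 - 1) * b * ((b : ℝ) ^ (-(j : ℝ)) * (b : ℝ) ^ (-(j : ℝ))) := by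
    rw [← Real.rpow_add_one hb0.ne', ← Real.rpow_add hb0, ← Real.rpow_add hb0]
    ring_nf
  rw [hscale]
  ring

end Coefficients

section FiniteNorm

variable {p : ℝ≥0∞} {ι κ : Type*} {A : Finset ι} {g : ι → ℝ≥0∞}

theorem lpIdx_congr {h : ι → ℝ≥0∞} (hgh : ∀ a ∈ A, g a = h a) : lpIdx p A g = lpIdx p A h := by
  unfold lpIdx
  rw [Finset.sup_congr rfl hgh, Finset.sum_congr rfl fun a ha => by rw [hgh a ha]]

theorem lpIdx_ne_top (hg : ∀ a ∈ A, g a ≠ ∞) : lpIdx p A g ≠ ∞ := by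
  unfold lpIdx
  split_ifs
  · exact ((Finset.sup_lt_iff ENNReal.zero_lt_top).2 fun a ha => (hg a ha).lt_top).ne
  · refine ENNReal.rpow_ne_top_of_nonneg (by positivity) (ENNReal.sum_ne_top.2 fun a ha => ?_)
    exact ENNReal.rpow_ne_top_of_nonneg toReal_nonneg (hg a ha)

theorem lpIdx_ne_zero (hp : p ≠ 0) (hg : ∃ a ∈ A, g a ≠ 0) : lpIdx p A g ≠ 0 := by
  obtain ⟨a, ha, hga⟩ := hg
  unfold lpIdx
  split_ifs with hp_top
  · exact ((pos_iff_ne_zero.2 hga).trans_le (Finset.le_sup ha)).ne'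
  · have hp_pos : 0 < p.toReal := ENNReal.toReal_pos hp hp_top
    rw [ne_eq, ENNReal.rpow_eq_zero_iff_of_pos (one_div_pos.2 hp_pos), Finset.sum_eq_zero_iff]
    exact fun hzero => hga ((ENNReal.rpow_eq_zero_iff_of_pos hp_pos).1 (hzero a ha))

theorem lpIdx_mul_right (hp : p ≠ 0) (c : ℝ≥0∞) :
    lpIdx p A (fun a => g a * c) = lpIdx p A g * c := by
  unfold lpIdx
  split_ifs with hp_top
  · exact (Finset.sup_mul₀ A g c).symm
  · have hp_pos : 0 < p.toReal := ENNReal.toReal_pos hp hp_top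
    simp only [ENNReal.mul_rpow_of_nonneg _ _ hp_pos.le]
    rw [← Finset.sum_mul, ENNReal.mul_rpow_of_nonneg _ _ (one_div_pos.2 hp_pos).le,
      ← ENNReal.rpow_mul, mul_one_div_cancel hp_pos.ne', ENNReal.rpow_one]

-- For `p = ∞` the exponent `1 / p.toReal` is `1 / 0 = 0`, so the cardinality factor is `1`.
theorem lpIdx_product_snd (hA : A.Nonempty) (B : Finset κ) (h : κ → ℝ≥0∞) :
    lpIdx p (A ×ˢ B) (fun x => h x.2) = (A.card : ℝ≥0∞) ^ (1 / p.toReal) * lpIdx p B h := by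
  unfold lpIdx
  split_ifs with hp_top
  · simp only [Finset.sup_product_left, Finset.sup_const hA, hp_top, toReal_top, _root_.div_zero,
      ENNReal.rpow_zero, one_mul]
  · simp only [Finset.sum_product]
    rw [Finset.sum_const, nsmul_eq_mul,
      ENNReal.mul_rpow_of_nonneg _ _ (by positivity)]

end FiniteNorm

theorem lqIdx_lt_top_iff_of_geometric_tail {q : ℝ≥0∞} (hq : q ≠ 0) (hq_top : q ≠ ∞)
    {u : ℕ → ℝ≥0∞} {K r : ℝ≥0∞} (hu : u 0 ≠ ∞) (hK : K ≠ 0) (hK_top : K ≠ ∞)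
    (htail : ∀ n, u (n + 1) = K * r ^ n) : lqIdx q u < ∞ ↔ r < 1 := by
  have hq_pos : 0 < q.toReal := ENNReal.toReal_pos hq hq_top
  have hterm (n : ℕ) : u (n + 1) ^ q.toReal = K ^ q.toReal * (r ^ q.toReal) ^ n := by
    rw [htail, ENNReal.mul_rpow_of_nonneg _ _ hq_pos.le, ← ENNReal.rpow_natCast,
      ← ENNReal.rpow_natCast, ← ENNReal.rpow_mul, ← ENNReal.rpow_mul, mul_comm (n : ℝ)]
  have hK_rpow : K ^ q.toReal ≠ 0 := by rwa [ne_eq, ENNReal.rpow_eq_zero_iff_of_pos hq_pos]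
  have hK_rpow_top : K ^ q.toReal ≠ ∞ := ENNReal.rpow_ne_top_of_nonneg hq_pos.le hK_top
  calc lqIdx q u < ∞
      ↔ u 0 ^ q.toReal + ∑' n, u (n + 1) ^ q.toReal < ∞ := by
        rw [lqIdx, if_neg hq_top, ENNReal.rpow_lt_top_iff_of_pos (one_div_pos.2 hq_pos),
          tsum_eq_zero_add' ENNReal.summable]
    _ ↔ K ^ q.toReal * ∑' n, (r ^ q.toReal) ^ n < ∞ := by
        simp only [hterm, ENNReal.tsum_mul_left, ENNReal.add_lt_top,
          ENNReal.rpow_lt_top_of_nonneg hq_pos.le hu, true_and]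
    _ ↔ r ^ q.toReal < 1 := by
        rw [← tsum_geometric_lt_top]
        simp only [lt_top_iff_ne_top, ne_eq, ENNReal.mul_eq_top, hK_rpow, hK_rpow_top,
          not_false_eq_true, true_and, false_and, or_false]
    _ ↔ r < 1 := by
        conv_lhs => rw [← ENNReal.one_rpow q.toReal, ENNReal.rpow_lt_rpow_iff hq_pos]

theorem ennreal_rpow_lt_one_iff_of_one_lt {x : ℝ≥0∞} (hx : 1 < x) (hx_top : x ≠ ∞) {y : ℝ} :
    x ^ y < 1 ↔ y < 0 := by
  have hmono : StrictMono fun z : ℝ => x ^ z := fun _ _ =>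
    ENNReal.rpow_lt_rpow_of_exponent_lt hx hx_top
  simpa only [ENNReal.rpow_zero] using hmono.lt_iff_lt (b := 0)

section SelfSimilar

variable {b : ℕ} {p : ℝ≥0∞} {f : ℝ → ℝ} {c : ℕ → ℝ} {s : ℝ}

theorem lpIdx_haarCoefU_succ (hb : b ≠ 0) (hp : p ≠ 0) {n : ℕ}
    (hcoef : ∀ i ∈ nablaIdx b (n + 1), ∀ k ∈ deltaIdx b (n + 1),
      haarCoefU b f (n + 1) i k = c i * (b : ℝ) ^ (-s * (n + 1 : ℕ))) :
    lpIdx p (deltaIdx b (n + 1) ×ˢ nablaIdx b (n + 1))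
        (fun ki => ENNReal.ofReal |haarCoefU b f (n + 1) ki.2 ki.1|) =
      (b : ℝ≥0∞) ^ ((n : ℝ) / p.toReal) *
        (lpIdx p (Finset.range b) (fun i => ENNReal.ofReal |c i|) *
          (b : ℝ≥0∞) ^ (-s * (n + 1 : ℕ))) := by
  have hb0 : (0 : ℝ) < b := by positivity
  have habs : ∀ ki ∈ deltaIdx b (n + 1) ×ˢ nablaIdx b (n + 1),
      ENNReal.ofReal |haarCoefU b f (n + 1) ki.2 ki.1| =
        ENNReal.ofReal |c ki.2| * (b : ℝ≥0∞) ^ (-s * (n + 1 : ℕ)) := by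
    intro ki hki
    obtain ⟨hk, hi⟩ := Finset.mem_product.1 hki
    rw [hcoef _ hi _ hk, abs_mul, abs_of_pos (Real.rpow_pos_of_pos hb0 _),
      ENNReal.ofReal_mul (abs_nonneg _), ← ENNReal.ofReal_rpow_of_pos hb0, ENNReal.ofReal_natCast]
  have hpositions : (Finset.range (b ^ n)).Nonempty :=
    Finset.nonempty_range_iff.2 (pow_ne_zero n hb)
  rw [lpIdx_congr habs, lpIdx_mul_right hp (g := fun ki : ℕ × ℕ => ENNReal.ofReal |c ki.2|),
    deltaIdx_succ, nablaIdx_of_ne_zero b n.succ_ne_zero,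
    lpIdx_product_snd hpositions _ fun i => ENNReal.ofReal |c i|, Finset.card_range, Nat.cast_pow,
    ← ENNReal.rpow_natCast, ← ENNReal.rpow_mul, mul_one_div, mul_assoc]

theorem weight_mul_lpIdx_haarCoefU_succ (hb : b ≠ 0) (hp : p ≠ 0) (α : ℝ) {n : ℕ}
    (hcoef : ∀ i ∈ nablaIdx b (n + 1), ∀ k ∈ deltaIdx b (n + 1),
      haarCoefU b f (n + 1) i k = c i * (b : ℝ) ^ (-s * (n + 1 : ℕ))) :
    ENNReal.ofReal ((b : ℝ) ^ ((α - 1 / p.toReal + 1 / 2) * (n + 1 : ℕ))) *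
        lpIdx p (deltaIdx b (n + 1) ×ˢ nablaIdx b (n + 1))
          (fun ki => ENNReal.ofReal |haarCoefU b f (n + 1) ki.2 ki.1|) =
      lpIdx p (Finset.range b) (fun i => ENNReal.ofReal |c i|) *
        (b : ℝ≥0∞) ^ (α - 1 / p.toReal + 1 / 2 - s) * ((b : ℝ≥0∞) ^ (α + 1 / 2 - s)) ^ n := by
  have hb_ne : (b : ℝ≥0∞) ≠ 0 := Nat.cast_ne_zero.2 hb
  set L := lpIdx p (Finset.range b) fun i => ENNReal.ofReal |c i|
  rw [lpIdx_haarCoefU_succ hb hp hcoef, ← ENNReal.ofReal_rpow_of_pos (by positivity),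
    ENNReal.ofReal_natCast, mul_left_comm _ L, mul_left_comm _ L, mul_assoc L,
    ← ENNReal.rpow_natCast, ← ENNReal.rpow_mul]
  simp only [← ENNReal.rpow_add _ _ hb_ne (ENNReal.natCast_ne_top b)]
  congr 2
  push_cast
  ring

theorem wavNormU_lt_top_iff_of_haarCoefU_eq {q : ℝ≥0∞} (hb : 2 ≤ b) (hp : p ≠ 0) (hq : q ≠ 0)
    (hq_top : q ≠ ∞) (hc : ∃ i < b, c i ≠ 0)
    (hcoef : ∀ j, j ≠ 0 → ∀ i ∈ nablaIdx b j, ∀ k ∈ deltaIdx b j,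
      haarCoefU b f j i k = c i * (b : ℝ) ^ (-s * j)) (α : ℝ) :
    wavNormU b α p q f < ∞ ↔ α < s - 1 / 2 := by
  have hb_ne : (b : ℝ≥0∞) ≠ 0 := Nat.cast_ne_zero.2 (by lia)
  have hb_top : (b : ℝ≥0∞) ≠ ∞ := ENNReal.natCast_ne_top b
  have hb_one : (1 : ℝ≥0∞) < b := Nat.one_lt_cast.2 hb
  have hprofile : lpIdx p (Finset.range b) (fun i => ENNReal.ofReal |c i|) ≠ 0 := by
    obtain ⟨i, hi, hci⟩ := hc
    exact lpIdx_ne_zero hp ⟨i, Finset.mem_range.2 hi,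
      (ENNReal.ofReal_pos.2 (abs_pos.2 hci)).ne'⟩
  have hprofile_top : lpIdx p (Finset.range b) (fun i => ENNReal.ofReal |c i|) ≠ ∞ :=
    lpIdx_ne_top fun _ _ => ENNReal.ofReal_ne_top
  have hratio : wavNormU b α p q f < ∞ ↔ (b : ℝ≥0∞) ^ (α + 1 / 2 - s) < 1 :=
    lqIdx_lt_top_iff_of_geometric_tail hq hq_top
      (ENNReal.mul_ne_top ENNReal.ofReal_ne_top (lpIdx_ne_top fun _ _ => ENNReal.ofReal_ne_top))
      (mul_ne_zero hprofile (ENNReal.rpow_pos (pos_iff_ne_zero.2 hb_ne) hb_top).ne')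
      (ENNReal.mul_ne_top hprofile_top (ENNReal.rpow_ne_top_of_ne_zero hb_ne hb_top))
      fun n => weight_mul_lpIdx_haarCoefU_succ (by lia) hp α (hcoef (n + 1) n.succ_ne_zero)
  rw [hratio, ennreal_rpow_lt_one_iff_of_one_lt hb_one hb_top]
  constructor <;> intro h <;> linarith

end SelfSimilar

theorem identity_coefficients_and_norm_general (b : ℕ) (hb : 2 ≤ b)
    (p q : ℝ≥0∞) (hp : p ≠ 0) (hq : q ≠ 0) (hqtop : q ≠ ∞) :
    haarCoefU b (fun x => x) 0 0 0 = 1 / 2 ∧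
    (∀ j : ℕ, 1 ≤ j → ∀ i ∈ nablaIdx b j, ∀ k ∈ deltaIdx b j,
      haarCoefU b (fun x => x) j i k =
        (2 * (i : ℝ) + 1 - (b : ℝ)) * (b : ℝ) ^ (-(3 / 2 : ℝ) * (j : ℝ)) / 2) ∧
    (∀ α : ℝ, wavNormU b α p q (fun x => x) < ∞ ↔ α < 1) := by
  refine ⟨?_, fun j hj i hi k hk => haarCoefU_id (by lia) hi hk, fun α => ?_⟩
  · rw [haarCoefU_zero, integral_id]
    norm_num
  · have hfirst : (2 * ((0 : ℕ) : ℝ) + 1 - b) / 2 ≠ 0 := by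
      have hb_real : (2 : ℝ) ≤ b := by exact_mod_cast hb
      push_cast
      linarith
    have hcriterion := wavNormU_lt_top_iff_of_haarCoefU_eq (c := fun i => (2 * (i : ℝ) + 1 - b) / 2)
      hb hp hq hqtop ⟨0, by lia, hfirst⟩ (fun j hj i hi k hk =>
        (haarCoefU_id hj hi hk).trans (mul_div_right_comm _ _ _)) α
    rw [hcriterion]
    norm_num

/-- The Haar coefficients of the identity function `f(x) = x` are
`⟨f,ψ^0_{0,0}⟩ = 1/2` and `⟨f,ψ^j_{i,k}⟩ = (2i+1-b) b^{-3j/2}/2` for `j ≥ 1`, and its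
Haar wavelet norm is finite if and only if `α < 1`; in particular the identity function
(which lies in `H_{1,p}`) is not in `H_{wav,α,p,q}` for any `α ≥ 1`. -/
theorem identity_coefficients_and_norm (b : ℕ) (hb : 2 ≤ b)
    (p q : ℝ≥0∞) (hp : 1 ≤ p) (hq : 1 ≤ q) (hqtop : q ≠ ∞) :
    haarCoefU b (fun x => x) 0 0 0 = 1 / 2 ∧
    (∀ j : ℕ, 1 ≤ j → ∀ i ∈ nablaIdx b j, ∀ k ∈ deltaIdx b j,
      haarCoefU b (fun x => x) j i k =
        (2 * (i : ℝ) + 1 - (b : ℝ)) * (b : ℝ) ^ (-(3 / 2 : ℝ) * (j : ℝ)) / 2) ∧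
    (∀ α : ℝ, wavNormU b α p q (fun x => x) < ∞ ↔ α < 1) := by
  exact identity_coefficients_and_norm_general b hb p q (one_pos.trans_le hp).ne'
    (one_pos.trans_le hq).ne' hqtop

end
end
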